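/- arXiv:1310.5055 — 2 statements merged into one kernel-verified Lean document; each statement's English description precedes it below -/
import Mathlib

section
/- Let F be a field of characteristic ≠ 2 and α, β, γ, δ ∈ F*. The biquaternion algebra (α,β) ⊗_F (γ,δ) is a division algebra if and only if the six-dimensional diagonal quadratic form ⟨α, β, -αβ, -γ, -δ, γδ⟩ is anisotropic over F; and if this form is isotropic then (α,β) ⊗_F (γ,δ) is Brauer-equivalent to a quaternion algebra over F. -/
open scoped Quaternion TensorProduct

namespace Albert
variable {F : Type*} [Field F] {α β γ δ : F}

/-- The functional `re ⊗ re`. -/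
noncomputable def T : ℍ[F, α, β] ⊗[F] ℍ[F, γ, δ] →ₗ[F] F :=
  LinearMap.mul' F F ∘ₗ TensorProduct.map
    ((LinearMap.proj 0) ∘ₗ (QuaternionAlgebra.linearEquivTuple α 0 β).toLinearMap)
    ((LinearMap.proj 0) ∘ₗ (QuaternionAlgebra.linearEquivTuple γ 0 δ).toLinearMap)

theorem T_tmul (a : ℍ[F, α, β]) (b : ℍ[F, γ, δ]) : T (a ⊗ₜ[F] b) = a.re * b.re := by
  simp [T]

theorem expand (x : ℍ[F, α, β] ⊗[F] ℍ[F, γ, δ]) : ∃ q0 q1 q2 q3 : ℍ[F, γ, δ],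
    x = (⟨1, 0, 0, 0⟩ : ℍ[F, α, β]) ⊗ₜ[F] q0 + (⟨0, 1, 0, 0⟩ : ℍ[F, α, β]) ⊗ₜ[F] q1
      + (⟨0, 0, 1, 0⟩ : ℍ[F, α, β]) ⊗ₜ[F] q2 + (⟨0, 0, 0, 1⟩ : ℍ[F, α, β]) ⊗ₜ[F] q3 := by
  induction x with
  | zero => exact ⟨0, 0, 0, 0, by simp⟩
  | tmul a b =>
    refine ⟨a.re • b, a.imI • b, a.imJ • b, a.imK • b, ?_⟩
    simp only [← TensorProduct.smul_tmul, ← TensorProduct.add_tmul]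
    congr 1
    ext <;> simp
  | add x y hx hy =>
    obtain ⟨a, b, c, d, rfl⟩ := hx
    obtain ⟨a', b', c', d', rfl⟩ := hy
    refine ⟨a + a', b + b', c + c', d + d', ?_⟩
    simp only [TensorProduct.tmul_add]
    abel

theorem T_nondeg (hα : α ≠ 0) (hβ : β ≠ 0) (hγ : γ ≠ 0) (hδ : δ ≠ 0)
    (x : ℍ[F, α, β] ⊗[F] ℍ[F, γ, δ]) (h : ∀ y, T (x * y) = 0) : x = 0 := by
  obtain ⟨q0, q1, q2, q3, rfl⟩ := expand x
  have key : ∀ q : ℍ[F, γ, δ], (∀ f : ℍ[F, γ, δ], (q * f).re = 0) → q = 0 := by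
    intro q hq
    have h0 := hq ⟨1, 0, 0, 0⟩
    have h1 := hq ⟨0, 1, 0, 0⟩
    have h2 := hq ⟨0, 0, 1, 0⟩
    have h3 := hq ⟨0, 0, 0, 1⟩
    simp [hγ, hδ] at h0 h1 h2 h3
    ext <;> simp [*]
  have h0 : q0 = 0 := key _ fun f => by
    simpa [add_mul, T_tmul] using h ((⟨1, 0, 0, 0⟩ : ℍ[F, α, β]) ⊗ₜ[F] f)
  have h1 : q1 = 0 := key _ fun f => by
    simpa [add_mul, T_tmul, hα] using h ((⟨0, 1, 0, 0⟩ : ℍ[F, α, β]) ⊗ₜ[F] f)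
  have h2 : q2 = 0 := key _ fun f => by
    simpa [add_mul, T_tmul, hβ] using h ((⟨0, 0, 1, 0⟩ : ℍ[F, α, β]) ⊗ₜ[F] f)
  have h3 : q3 = 0 := key _ fun f => by
    simpa [add_mul, T_tmul, hα, hβ] using h ((⟨0, 0, 0, 1⟩ : ℍ[F, α, β]) ⊗ₜ[F] f)
  simp [h0, h1, h2, h3]

theorem avg (hα : α ≠ 0) (hβ : β ≠ 0) (a : ℍ[F, α, β]) :
    a + α⁻¹ • ((⟨0, 1, 0, 0⟩ : ℍ[F, α, β]) * a * ⟨0, 1, 0, 0⟩)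
      + β⁻¹ • ((⟨0, 0, 1, 0⟩ : ℍ[F, α, β]) * a * ⟨0, 0, 1, 0⟩)
      - (α * β)⁻¹ • ((⟨0, 0, 0, 1⟩ : ℍ[F, α, β]) * a * ⟨0, 0, 0, 1⟩) = (4 * a.re) • 1 := by
  ext <;> simp <;> field_simp <;> ring

/-- Averaging over the first factor. -/
theorem avg1 (hα : α ≠ 0) (hβ : β ≠ 0) (q0 q1 q2 q3 : ℍ[F, γ, δ])
    (x : ℍ[F, α, β] ⊗[F] ℍ[F, γ, δ])
    (hx : x = (⟨1, 0, 0, 0⟩ : ℍ[F, α, β]) ⊗ₜ[F] q0 + (⟨0, 1, 0, 0⟩ : ℍ[F, α, β]) ⊗ₜ[F] q1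
      + (⟨0, 0, 1, 0⟩ : ℍ[F, α, β]) ⊗ₜ[F] q2 + (⟨0, 0, 0, 1⟩ : ℍ[F, α, β]) ⊗ₜ[F] q3) :
    x + α⁻¹ • (((⟨0, 1, 0, 0⟩ : ℍ[F, α, β]) ⊗ₜ[F] 1) * x * (⟨0, 1, 0, 0⟩ ⊗ₜ[F] 1))
      + β⁻¹ • (((⟨0, 0, 1, 0⟩ : ℍ[F, α, β]) ⊗ₜ[F] 1) * x * (⟨0, 0, 1, 0⟩ ⊗ₜ[F] 1))
      - (α * β)⁻¹ • (((⟨0, 0, 0, 1⟩ : ℍ[F, α, β]) ⊗ₜ[F] 1) * x * (⟨0, 0, 0, 1⟩ ⊗ₜ[F] 1))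
      = (1 : ℍ[F, α, β]) ⊗ₜ[F] ((4 : F) • q0) := by
  have key : ∀ (a : ℍ[F, α, β]) (b : ℍ[F, γ, δ]), (a ⊗ₜ[F] b)
      + α⁻¹ • (((⟨0, 1, 0, 0⟩ : ℍ[F, α, β]) ⊗ₜ[F] 1) * (a ⊗ₜ[F] b) * (⟨0, 1, 0, 0⟩ ⊗ₜ[F] 1))
      + β⁻¹ • (((⟨0, 0, 1, 0⟩ : ℍ[F, α, β]) ⊗ₜ[F] 1) * (a ⊗ₜ[F] b) * (⟨0, 0, 1, 0⟩ ⊗ₜ[F] 1))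
      - (α * β)⁻¹ • (((⟨0, 0, 0, 1⟩ : ℍ[F, α, β]) ⊗ₜ[F] 1) * (a ⊗ₜ[F] b)
        * (⟨0, 0, 0, 1⟩ ⊗ₜ[F] 1))
      = ((4 * a.re) • (1 : ℍ[F, α, β])) ⊗ₜ[F] b := by
    intro a b
    simp only [Algebra.TensorProduct.tmul_mul_tmul, one_mul, mul_one, TensorProduct.smul_tmul',
      ← TensorProduct.add_tmul, ← TensorProduct.sub_tmul, avg hα hβ]
  have e0 := key ⟨1, 0, 0, 0⟩ q0
  have e1 := key ⟨0, 1, 0, 0⟩ q1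
  have e2 := key ⟨0, 0, 1, 0⟩ q2
  have e3 := key ⟨0, 0, 0, 1⟩ q3
  simp only [mul_one, mul_zero, zero_smul, TensorProduct.zero_tmul] at e0 e1 e2 e3
  rw [← TensorProduct.smul_tmul, ← e0, hx]
  simp only [mul_add, add_mul, smul_add]
  linear_combination (norm := module) e1 + e2 + e3

theorem one_mem (hF : (2 : F) ≠ 0) (hα : α ≠ 0) (hβ : β ≠ 0) (hγ : γ ≠ 0) (hδ : δ ≠ 0)
    (S : Submodule F (ℍ[F, α, β] ⊗[F] ℍ[F, γ, δ]))
    (hl : ∀ a x, x ∈ S → a * x ∈ S) (hr : ∀ a x, x ∈ S → x * a ∈ S)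
    (x : ℍ[F, α, β] ⊗[F] ℍ[F, γ, δ]) (hx : x ∈ S) (h0 : x ≠ 0) : 1 ∈ S := by
  obtain ⟨y, hy⟩ : ∃ y, T (x * y) ≠ 0 := by
    by_contra! h
    exact h0 (T_nondeg hα hβ hγ hδ x h)
  have hz := hr y x hx
  generalize x * y = z at hy hz
  obtain ⟨q0, q1, q2, q3, hq⟩ := expand z
  have hT : T z = q0.re := by simp [hq, T_tmul]
  have hmem : (1 : ℍ[F, α, β]) ⊗ₜ[F] ((4 : F) • q0) ∈ S := by
    rw [← avg1 hα hβ q0 q1 q2 q3 z hq]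
    exact S.sub_mem (S.add_mem (S.add_mem hz (S.smul_mem _ (hr _ _ (hl _ _ hz))))
      (S.smul_mem _ (hr _ _ (hl _ _ hz)))) (S.smul_mem _ (hr _ _ (hl _ _ hz)))
  have hmem2 : (1 : ℍ[F, α, β]) ⊗ₜ[F] ((4 * ((4 : F) • q0).re) • (1 : ℍ[F, γ, δ])) ∈ S := by
    rw [← avg hγ hδ]
    have hh : ∀ (c : F) (a b : ℍ[F, γ, δ]),
        (1 : ℍ[F, α, β]) ⊗ₜ[F] (c • (a * ((4 : F) • q0) * b)) ∈ S := by
      intro c a b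
      have := S.smul_mem c (hr (1 ⊗ₜ b) _ (hl (1 ⊗ₜ a) _ hmem))
      rw [Algebra.TensorProduct.tmul_mul_tmul, Algebra.TensorProduct.tmul_mul_tmul, one_mul, one_mul] at this
      rw [TensorProduct.tmul_smul]
      exact this
    rw [TensorProduct.tmul_sub, TensorProduct.tmul_add, TensorProduct.tmul_add]
    exact S.sub_mem (S.add_mem (S.add_mem hmem (hh _ _ _)) (hh _ _ _)) (hh _ _ _)
  rw [TensorProduct.tmul_smul] at hmem2
  have hne : (4 * ((4 : F) • q0).re) ≠ 0 := by
    have h4 : (4 : F) ≠ 0 := by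
      have : (4 : F) = 2 * 2 := by norm_num
      rw [this]; exact mul_ne_zero hF hF
    rw [QuaternionAlgebra.re_smul, smul_eq_mul]
    exact mul_ne_zero h4 (mul_ne_zero h4 (hT ▸ hy))
  exact (S.smul_mem_iff hne).1 hmem2

theorem injective_of_algHom (hF : (2 : F) ≠ 0) (hα : α ≠ 0) (hβ : β ≠ 0) (hγ : γ ≠ 0) (hδ : δ ≠ 0)
    {B : Type*} [Ring B] [Nontrivial B] [Algebra F B]
    (f : ℍ[F, α, β] ⊗[F] ℍ[F, γ, δ] →ₐ[F] B) : Function.Injective f := by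
  rw [injective_iff_map_eq_zero]
  intro x hx
  by_contra h0
  have := one_mem hF hα hβ hγ hδ (LinearMap.ker f.toLinearMap)
    (fun a x hx => by simp at hx ⊢; simp [hx]) (fun a x hx => by simp at hx ⊢; simp [hx]) x
    (by simpa using hx) h0
  simp at this

theorem prime (hF : (2 : F) ≠ 0) (hα : α ≠ 0) (hβ : β ≠ 0) (hγ : γ ≠ 0) (hδ : δ ≠ 0)
    (x y : ℍ[F, α, β] ⊗[F] ℍ[F, γ, δ]) (h : ∀ c, x * c * y = 0) (hx : x ≠ 0) : y = 0 := by
  let S : Submodule F (ℍ[F, α, β] ⊗[F] ℍ[F, γ, δ]) :=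
    { carrier := {z | ∀ c, z * c * y = 0}
      add_mem' := fun {a b} ha hb c => by rw [add_mul, add_mul, ha c, hb c, add_zero]
      zero_mem' := fun c => by simp
      smul_mem' := fun r a ha c => by rw [smul_mul_assoc, smul_mul_assoc, ha c, smul_zero] }
  have h1 : (1 : ℍ[F, α, β] ⊗[F] ℍ[F, γ, δ]) ∈ S := one_mem hF hα hβ hγ hδ S
    (fun a z hz c => by rw [mul_assoc a, mul_assoc a, hz c, mul_zero])
    (fun a z hz c => by rw [mul_assoc z, hz]) x h hx
  simpa using h1 1

theorem bijective_of_algHom (hF : (2 : F) ≠ 0) (hα : α ≠ 0) (hβ : β ≠ 0) (hγ : γ ≠ 0) (hδ : δ ≠ 0)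
    {B : Type*} [Ring B] [Nontrivial B] [Algebra F B] [Module.Finite F B]
    (hB : Module.finrank F B = 16)
    (f : ℍ[F, α, β] ⊗[F] ℍ[F, γ, δ] →ₐ[F] B) : Function.Bijective f := by
  have hi := injective_of_algHom hF hα hβ hγ hδ f
  refine ⟨hi, ?_⟩
  have := (LinearMap.injective_iff_surjective_of_finrank_eq_finrank (f := f.toLinearMap) (by
    rw [hB, Module.finrank_tensorProduct, QuaternionAlgebra.finrank_eq_four,
      QuaternionAlgebra.finrank_eq_four])).1 hi
  exact this

/-- The tensor product of the conjugations. -/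
noncomputable def cj : ℍ[F, α, β] ⊗[F] ℍ[F, γ, δ] →ₗ[F] ℍ[F, α, β] ⊗[F] ℍ[F, γ, δ] :=
  TensorProduct.map
    { toFun := star, map_add' := star_add, map_smul' := fun r x => by ext <;> simp }
    { toFun := star, map_add' := star_add, map_smul' := fun r x => by ext <;> simp }

theorem cj_tmul (a : ℍ[F, α, β]) (b : ℍ[F, γ, δ]) : cj (a ⊗ₜ[F] b) = star a ⊗ₜ star b := rfl

theorem cj_mul (x y : ℍ[F, α, β] ⊗[F] ℍ[F, γ, δ]) : cj (x * y) = cj y * cj x := by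
  induction x with
  | zero => simp
  | add x x' hx hx' => rw [add_mul, map_add, map_add, hx, hx', mul_add]
  | tmul a b =>
    induction y with
    | zero => simp
    | add y y' hx hx' => rw [mul_add, map_add, map_add, hx, hx', add_mul]
    | tmul c d => simp [cj_tmul]

theorem cj_cj (x : ℍ[F, α, β] ⊗[F] ℍ[F, γ, δ]) : cj (cj x) = x := by
  induction x with
  | zero => simp
  | add x x' hx hx' => rw [map_add, map_add, hx, hx']
  | tmul a b => simp [cj_tmul]

theorem skew_form (hF : (2 : F) ≠ 0) (x : ℍ[F, α, β] ⊗[F] ℍ[F, γ, δ]) (hx : cj x = -x) :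
    ∃ a b c d e f : F, x = (⟨0, a, b, c⟩ : ℍ[F, α, β]) ⊗ₜ[F] (1 : ℍ[F, γ, δ])
      + (1 : ℍ[F, α, β]) ⊗ₜ[F] (⟨0, d, e, f⟩ : ℍ[F, γ, δ]) := by
  obtain ⟨q0, q1, q2, q3, hq⟩ := expand x
  refine ⟨q1.re, q2.re, q3.re, q0.imI, q0.imJ, q0.imK, ?_⟩
  have h2 : (2 : F) • x = x - cj x := by rw [hx, two_smul]; abel
  have h3 : x - cj x = (2 : F) • ((⟨0, q1.re, q2.re, q3.re⟩ : ℍ[F, α, β]) ⊗ₜ[F] (1 : ℍ[F, γ, δ])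
      + (1 : ℍ[F, α, β]) ⊗ₜ[F] (⟨0, q0.imI, q0.imJ, q0.imK⟩ : ℍ[F, γ, δ])) := by
    have e0 : (⟨0, q0.imI, q0.imJ, q0.imK⟩ : ℍ[F, γ, δ]) = (2 : F)⁻¹ • (q0 - star q0) := by
      ext <;> simp <;> field_simp <;> ring
    have ee : ∀ q : ℍ[F, γ, δ], star q = (2 * q.re) • (1 : ℍ[F, γ, δ]) - q := by
      intro q; ext <;> simp <;> ring
    have e1 : (⟨0, q1.re, q2.re, q3.re⟩ : ℍ[F, α, β]) = q1.re • ⟨0, 1, 0, 0⟩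
      + q2.re • ⟨0, 0, 1, 0⟩ + q3.re • ⟨0, 0, 0, 1⟩ := by ext <;> simp
    have s0 : star (⟨1, 0, 0, 0⟩ : ℍ[F, α, β]) = ⟨1, 0, 0, 0⟩ := by ext <;> simp
    have s1 : star (⟨0, 1, 0, 0⟩ : ℍ[F, α, β]) = -⟨0, 1, 0, 0⟩ := by ext <;> simp
    have s2 : star (⟨0, 0, 1, 0⟩ : ℍ[F, α, β]) = -⟨0, 0, 1, 0⟩ := by ext <;> simp
    have s3 : star (⟨0, 0, 0, 1⟩ : ℍ[F, α, β]) = -⟨0, 0, 0, 1⟩ := by ext <;> simp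
    have s4 : (1 : ℍ[F, α, β]) = ⟨1, 0, 0, 0⟩ := rfl
    rw [e0, e1, hq, s4]
    simp only [map_add, cj_tmul, s0, s1, s2, s3, TensorProduct.add_tmul, TensorProduct.neg_tmul,
      TensorProduct.tmul_smul, TensorProduct.tmul_sub, ← TensorProduct.smul_tmul', ee]
    match_scalars <;> field_simp <;> ring
  exact smul_right_injective _ hF (h2.trans h3)

theorem symm_form (hF : (2 : F) ≠ 0) (x : ℍ[F, α, β] ⊗[F] ℍ[F, γ, δ]) (hx : cj x = x) :
    ∃ (r : F) (a b c : Fin 3 → F), x = (1 : ℍ[F, α, β]) ⊗ₜ[F] (⟨r, 0, 0, 0⟩ : ℍ[F, γ, δ])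
      + (⟨0, 1, 0, 0⟩ : ℍ[F, α, β]) ⊗ₜ[F] (⟨0, a 0, a 1, a 2⟩ : ℍ[F, γ, δ])
      + (⟨0, 0, 1, 0⟩ : ℍ[F, α, β]) ⊗ₜ[F] (⟨0, b 0, b 1, b 2⟩ : ℍ[F, γ, δ])
      + (⟨0, 0, 0, 1⟩ : ℍ[F, α, β]) ⊗ₜ[F] (⟨0, c 0, c 1, c 2⟩ : ℍ[F, γ, δ]) := by
  obtain ⟨q0, q1, q2, q3, hq⟩ := expand x
  refine ⟨q0.re, ![q1.imI, q1.imJ, q1.imK], ![q2.imI, q2.imJ, q2.imK],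
    ![q3.imI, q3.imJ, q3.imK], ?_⟩
  have h2 : x = (2 : F)⁻¹ • (x + cj x) := by rw [hx, ← two_smul F, smul_smul, inv_mul_cancel₀ hF, one_smul]
  have e0 : (⟨q0.re, 0, 0, 0⟩ : ℍ[F, γ, δ]) = (2 : F)⁻¹ • (q0 + star q0) := by
    ext <;> simp <;> field_simp <;> ring
  have ee : ∀ q : ℍ[F, γ, δ], (⟨0, q.imI, q.imJ, q.imK⟩ : ℍ[F, γ, δ]) = (2 : F)⁻¹ • (q - star q) := by
    intro q; ext <;> simp <;> field_simp <;> ring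
  have s0 : star (⟨1, 0, 0, 0⟩ : ℍ[F, α, β]) = ⟨1, 0, 0, 0⟩ := by ext <;> simp
  have s1 : star (⟨0, 1, 0, 0⟩ : ℍ[F, α, β]) = -⟨0, 1, 0, 0⟩ := by ext <;> simp
  have s2 : star (⟨0, 0, 1, 0⟩ : ℍ[F, α, β]) = -⟨0, 0, 1, 0⟩ := by ext <;> simp
  have s3 : star (⟨0, 0, 0, 1⟩ : ℍ[F, α, β]) = -⟨0, 0, 0, 1⟩ := by ext <;> simp
  have s4 : (1 : ℍ[F, α, β]) = ⟨1, 0, 0, 0⟩ := rfl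
  simp only [Matrix.cons_val_zero, Matrix.cons_val_one, Matrix.cons_val]
  rw [ee, ee, ee, e0, h2, hq, s4]
  simp only [map_add, cj_tmul, s0, s1, s2, s3, TensorProduct.neg_tmul,
      TensorProduct.tmul_smul, TensorProduct.tmul_sub, TensorProduct.tmul_add]
  module

theorem trace_calc (r : F) (a b c : Fin 3 → F) (t : ℍ[F, α, β] ⊗[F] ℍ[F, γ, δ])
    (ht : t = (1 : ℍ[F, α, β]) ⊗ₜ[F] (⟨r, 0, 0, 0⟩ : ℍ[F, γ, δ])
      + (⟨0, 1, 0, 0⟩ : ℍ[F, α, β]) ⊗ₜ[F] (⟨0, a 0, a 1, a 2⟩ : ℍ[F, γ, δ])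
      + (⟨0, 0, 1, 0⟩ : ℍ[F, α, β]) ⊗ₜ[F] (⟨0, b 0, b 1, b 2⟩ : ℍ[F, γ, δ])
      + (⟨0, 0, 0, 1⟩ : ℍ[F, α, β]) ⊗ₜ[F] (⟨0, c 0, c 1, c 2⟩ : ℍ[F, γ, δ])) (x y z : F) :
    T (t * ((⟨0, x, y, z⟩ : ℍ[F, α, β]) ⊗ₜ[F] (1 : ℍ[F, γ, δ])) *
      t * ((⟨0, x, y, z⟩ : ℍ[F, α, β]) ⊗ₜ[F] (1 : ℍ[F, γ, δ]))) =
    r ^ 2 * (α * x ^ 2 + β * y ^ 2 - α * β * z ^ 2)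
    + α * (γ * a 0 ^ 2 + δ * a 1 ^ 2 - γ * δ * a 2 ^ 2) *
        (α * x ^ 2 - β * y ^ 2 + α * β * z ^ 2)
    + β * (γ * b 0 ^ 2 + δ * b 1 ^ 2 - γ * δ * b 2 ^ 2) *
        (- α * x ^ 2 + β * y ^ 2 + α * β * z ^ 2)
    - α * β * (γ * c 0 ^ 2 + δ * c 1 ^ 2 - γ * δ * c 2 ^ 2) *
        (- α * x ^ 2 - β * y ^ 2 - α * β * z ^ 2)
    + 4 * α * β * x * y * (γ * a 0 * b 0 + δ * a 1 * b 1 - γ * δ * a 2 * b 2)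
    - 4 * α * α * β * x * z * (γ * a 0 * c 0 + δ * a 1 * c 1 - γ * δ * a 2 * c 2)
    - 4 * α * β * β * y * z * (γ * b 0 * c 0 + δ * b 1 * c 1 - γ * δ * b 2 * c 2) := by
  rw [ht]
  have s4 : (1 : ℍ[F, α, β]) = ⟨1, 0, 0, 0⟩ := rfl
  simp only [mul_add, add_mul, Algebra.TensorProduct.tmul_mul_tmul, map_add, T_tmul, mul_one, s4,
    QuaternionAlgebra.mk_mul_mk, mul_zero, zero_mul, add_zero, zero_add, sub_zero, zero_sub]
  ring

/-- The Albert form, written out, is anisotropic. -/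
def Aniso (α β γ δ : F) : Prop := ∀ x y z u v w : F,
  α * x ^ 2 + β * y ^ 2 - α * β * z ^ 2 - γ * u ^ 2 - δ * v ^ 2 + γ * δ * w ^ 2 = 0 →
    x = 0 ∧ y = 0 ∧ z = 0 ∧ u = 0 ∧ v = 0 ∧ w = 0

theorem symm_zero (hF : (2 : F) ≠ 0) (hα : α ≠ 0) (hβ : β ≠ 0)
    (hA : Aniso α β γ δ) (t : ℍ[F, α, β] ⊗[F] ℍ[F, γ, δ]) (hs : cj t = t)
    (h : ∀ x y z, t * ((⟨0, x, y, z⟩ : ℍ[F, α, β]) ⊗ₜ[F] (1 : ℍ[F, γ, δ])) * t = 0) : t = 0 := by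
  obtain ⟨r, a, b, c, ht⟩ := symm_form hF t hs
  have e := trace_calc r a b c t ht
  simp only [h, zero_mul, map_zero] at e
  have e1 := e 1 0 0
  have e2 := e 0 1 0
  have e3 := e 0 0 1
  set A := γ * a 0 ^ 2 + δ * a 1 ^ 2 - γ * δ * a 2 ^ 2 with hA'
  set B := γ * b 0 ^ 2 + δ * b 1 ^ 2 - γ * δ * b 2 ^ 2 with hB'
  set C := γ * c 0 ^ 2 + δ * c 1 ^ 2 - γ * δ * c 2 ^ 2 with hC'
  have f1 : r ^ 2 + α * A - β * B + α * β * C = 0 := by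
    apply mul_left_cancel₀ hα; linear_combination -e1
  have f2 : r ^ 2 - α * A + β * B + α * β * C = 0 := by
    apply mul_left_cancel₀ hβ; linear_combination -e2
  have f3 : r ^ 2 - α * A - β * B - α * β * C = 0 := by
    apply mul_left_cancel₀ (mul_ne_zero hα hβ); linear_combination e3
  have g1 : r ^ 2 = α * A := by
    apply mul_left_cancel₀ hF; linear_combination f2 + f3
  have g2 : r ^ 2 = β * B := by
    apply mul_left_cancel₀ hF; linear_combination f1 + f3
  have g3 : r ^ 2 = - (α * β) * C := by
    apply mul_left_cancel₀ hF; linear_combination f1 + f2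
  have k1 := hA r 0 0 (α * a 0) (α * a 1) (α * a 2) (by
    linear_combination α * g1 + α ^ 2 * hA')
  have k2 := hA 0 r 0 (β * b 0) (β * b 1) (β * b 2) (by
    linear_combination β * g2 + β ^ 2 * hB')
  have k3 := hA 0 0 r (α * β * c 0) (α * β * c 1) (α * β * c 2) (by
    linear_combination (-α * β) * g3 + (α * β) ^ 2 * hC')
  simp only [mul_eq_zero, hα, hβ, false_or] at k1 k2 k3
  obtain ⟨hr, -, -, a0, a1, a2⟩ := k1
  obtain ⟨-, -, -, b0, b1, b2⟩ := k2
  obtain ⟨-, -, -, c0, c1, c2⟩ := k3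
  have z : (⟨0, 0, 0, 0⟩ : ℍ[F, γ, δ]) = 0 := rfl
  rw [ht, hr, a0, a1, a2, b0, b1, b2, c0, c1, c2, z]
  simp

theorem skew_mul (a b c d e f : F) :
    ((⟨0, a, b, c⟩ : ℍ[F, α, β]) ⊗ₜ[F] (1 : ℍ[F, γ, δ])
      + (1 : ℍ[F, α, β]) ⊗ₜ[F] (⟨0, d, e, f⟩ : ℍ[F, γ, δ])) *
    ((⟨0, a, b, c⟩ : ℍ[F, α, β]) ⊗ₜ[F] (1 : ℍ[F, γ, δ])
      - (1 : ℍ[F, α, β]) ⊗ₜ[F] (⟨0, d, e, f⟩ : ℍ[F, γ, δ])) =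
    (α * a ^ 2 + β * b ^ 2 - α * β * c ^ 2 - γ * d ^ 2 - δ * e ^ 2 + γ * δ * f ^ 2) •
      (1 : ℍ[F, α, β] ⊗[F] ℍ[F, γ, δ]) := by
  have e1 : (⟨0, a, b, c⟩ : ℍ[F, α, β]) * ⟨0, a, b, c⟩ =
      (α * a ^ 2 + β * b ^ 2 - α * β * c ^ 2) • 1 := by
    ext <;> simp <;> ring
  have e2 : (⟨0, d, e, f⟩ : ℍ[F, γ, δ]) * ⟨0, d, e, f⟩ =
      (γ * d ^ 2 + δ * e ^ 2 - γ * δ * f ^ 2) • 1 := by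
    ext <;> simp <;> ring
  simp only [add_mul, mul_sub, Algebra.TensorProduct.tmul_mul_tmul, one_mul, mul_one, e1, e2,
    TensorProduct.tmul_smul, ← TensorProduct.smul_tmul', Algebra.TensorProduct.one_def]
  module

theorem cj_skew (s y : ℍ[F, α, β] ⊗[F] ℍ[F, γ, δ]) (hs : cj s = -s) :
    cj (y * s * cj y) = -(y * s * cj y) := by
  have h0 : cj s + s = 0 := by rw [hs, neg_add_cancel]
  rw [eq_neg_iff_add_eq_zero, cj_mul, cj_mul, cj_cj, mul_assoc y s, ← mul_add, ← add_mul, h0,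
    zero_mul, mul_zero]

theorem division (hF : (2 : F) ≠ 0) (hα : α ≠ 0) (hβ : β ≠ 0) (hγ : γ ≠ 0) (hδ : δ ≠ 0)
    (hA : Aniso α β γ δ) (x : ℍ[F, α, β] ⊗[F] ℍ[F, γ, δ]) (hx : x ≠ 0) : IsUnit x := by
  -- it suffices to find a right inverse
  have : IsArtinianRing (ℍ[F, α, β] ⊗[F] ℍ[F, γ, δ]) := IsArtinianRing.of_finite F _
  by_cases hs : ∃ s, cj s = -s ∧ x * s * cj x ≠ 0
  · obtain ⟨s, hs, hne⟩ := hs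
    have hsk : cj (x * s * cj x) = -(x * s * cj x) := cj_skew s x hs
    obtain ⟨a, b, c, d, e, f, hform⟩ := skew_form hF _ hsk
    have hm := skew_mul (α := α) (β := β) (γ := γ) (δ := δ) a b c d e f
    rw [← hform] at hm
    set N := α * a ^ 2 + β * b ^ 2 - α * β * c ^ 2 - γ * d ^ 2 - δ * e ^ 2 + γ * δ * f ^ 2 with hN
    have hN0 : N ≠ 0 := by
      intro h0
      obtain ⟨rfl, rfl, rfl, rfl, rfl, rfl⟩ := hA _ _ _ _ _ _ (hN.symm.trans h0)
      have z : (⟨0, 0, 0, 0⟩ : ℍ[F, γ, δ]) = 0 := rfl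
      have z' : (⟨0, 0, 0, 0⟩ : ℍ[F, α, β]) = 0 := rfl
      rw [z, z'] at hform
      exact hne (by simp [hform])
    rw [mul_assoc, mul_assoc] at hm
    refine IsUnit.of_mul_eq_one (N⁻¹ • (s * (cj x *
      ((⟨0, a, b, c⟩ : ℍ[F, α, β]) ⊗ₜ[F] (1 : ℍ[F, γ, δ])
        - (1 : ℍ[F, α, β]) ⊗ₜ[F] (⟨0, d, e, f⟩ : ℍ[F, γ, δ]))))) ?_
    rw [mul_smul_comm, hm, smul_smul, inv_mul_cancel₀ hN0, one_smul]
  · push Not at hs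
    exfalso
    have hcx : cj x ≠ 0 := fun h => hx (by rw [← cj_cj x, h, map_zero])
    refine hcx (prime hF hα hβ hγ hδ x (cj x) (fun c => ?_) hx)
    have hsym : cj (x * c * cj x) = x * c * cj x := by
      have := hs (c - cj c) (by rw [map_sub, cj_cj]; abel)
      rw [mul_sub, sub_mul, sub_eq_zero] at this
      rw [cj_mul, cj_mul, cj_cj, this, mul_assoc]
    refine symm_zero hF hα hβ hA _ hsym fun p q r => ?_
    set s := ((⟨0, p, q, r⟩ : ℍ[F, α, β]) ⊗ₜ[F] (1 : ℍ[F, γ, δ])) with hsdef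
    have hsk : cj s = -s := by
      rw [hsdef, cj_tmul, ← TensorProduct.neg_tmul]
      congr 1
      · ext <;> simp
      · simp
    have := hs ((c * cj x) * s * cj (c * cj x)) (cj_skew s _ hsk)
    nth_rewrite 2 [← hsym]
    rw [← this]
    simp only [cj_mul, cj_cj, mul_assoc]

theorem aniso_of_division (hα : α ≠ 0) (hβ : β ≠ 0) (hγ : γ ≠ 0) (hδ : δ ≠ 0)
    (h : ∀ x : ℍ[F, α, β] ⊗[F] ℍ[F, γ, δ], x ≠ 0 → IsUnit x) : Aniso α β γ δ := by
  intro a b c d e f h0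
  by_contra hne
  have hm := skew_mul (α := α) (β := β) (γ := γ) (δ := δ) a b c d e f
  rw [h0, zero_smul] at hm
  have key : ∀ y : ℍ[F, α, β] ⊗[F] ℍ[F, γ, δ], ∀ ε : F, ε ≠ 0 →
      y = (⟨0, a, b, c⟩ : ℍ[F, α, β]) ⊗ₜ[F] (1 : ℍ[F, γ, δ])
      + ε • ((1 : ℍ[F, α, β]) ⊗ₜ[F] (⟨0, d, e, f⟩ : ℍ[F, γ, δ])) → y ≠ 0 := by
    intro y ε hε hy hy0
    have g : ∀ z, T (y * z) = 0 := fun z => by rw [hy0, zero_mul, map_zero]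
    have g1 := g ((⟨0, 1, 0, 0⟩ : ℍ[F, α, β]) ⊗ₜ[F] (1 : ℍ[F, γ, δ]))
    have g2 := g ((⟨0, 0, 1, 0⟩ : ℍ[F, α, β]) ⊗ₜ[F] (1 : ℍ[F, γ, δ]))
    have g3 := g ((⟨0, 0, 0, 1⟩ : ℍ[F, α, β]) ⊗ₜ[F] (1 : ℍ[F, γ, δ]))
    have g4 := g ((1 : ℍ[F, α, β]) ⊗ₜ[F] (⟨0, 1, 0, 0⟩ : ℍ[F, γ, δ]))
    have g5 := g ((1 : ℍ[F, α, β]) ⊗ₜ[F] (⟨0, 0, 1, 0⟩ : ℍ[F, γ, δ]))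
    have g6 := g ((1 : ℍ[F, α, β]) ⊗ₜ[F] (⟨0, 0, 0, 1⟩ : ℍ[F, γ, δ]))
    simp only [hy, add_mul, smul_mul_assoc, Algebra.TensorProduct.tmul_mul_tmul, map_add,
      map_smul, T_tmul] at g1 g2 g3 g4 g5 g6
    simp [hα, hβ, hγ, hδ, hε] at g1 g2 g3 g4 g5 g6
    exact hne ⟨g1, g2, g3, g4, g5, g6⟩
  have h1 := h _ (key _ 1 one_ne_zero (by rw [one_smul]))
  have h2 := key _ (-1) (by simp) (by rw [neg_one_smul, ← sub_eq_add_neg]) 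
  exact h2 (h1.mul_right_eq_zero.1 hm)

theorem exists_basis (hF : (2 : F) ≠ 0) (hα : α ≠ 0) (hβ : β ≠ 0) (x y z a : F)
    (ha : α * x ^ 2 + β * y ^ 2 - α * β * z ^ 2 = a) (ha0 : a ≠ 0) :
    ∃ b : F, b ≠ 0 ∧ Nonempty (QuaternionAlgebra.Basis ℍ[F, α, β] a 0 b) := by
  have key : ∀ x' y' z' : F, α * x * x' + β * y * y' - α * β * z * z' = 0 →
      α * x' ^ 2 + β * y' ^ 2 - α * β * z' ^ 2 ≠ 0 →
      ∃ b : F, b ≠ 0 ∧ Nonempty (QuaternionAlgebra.Basis ℍ[F, α, β] a 0 b) := by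
    intro x' y' z' h hb
    refine ⟨_, hb, ⟨QuaternionAlgebra.Basis.mk ⟨0, x, y, z⟩ ⟨0, x', y', z'⟩
      (⟨0, x, y, z⟩ * ⟨0, x', y', z'⟩) ?_ ?_ rfl ?_⟩⟩
    · ext <;> simp <;> first | ring1 | linear_combination ha
    · ext <;> simp <;> ring
    · ext <;> simp <;> first | ring1 | linear_combination 2 * h
  by_cases h1 : α * x ^ 2 + β * y ^ 2 = 0
  · by_cases h2 : β * z ^ 2 - x ^ 2 = 0
    · by_cases h3 : α * z ^ 2 - y ^ 2 = 0
      · exfalso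
        have hz : 2 * (α * β * z ^ 2) = 0 := by linear_combination h1 + α * h2 + β * h3
        rw [mul_eq_zero, or_iff_right hF] at hz
        apply ha0
        linear_combination h1 - hz - ha
      · refine key 0 (α * z) y (by ring) ?_
        have := mul_ne_zero (mul_ne_zero hα hβ) h3
        contrapose! this
        linear_combination this
    · refine key (β * z) 0 x (by ring) ?_
      have := mul_ne_zero (mul_ne_zero hα hβ) h2
      contrapose! this
      linear_combination this
  · refine key (β * y) (-α * x) 0 (by ring) ?_
    have := mul_ne_zero (mul_ne_zero hα hβ) h1
    contrapose! this
    linear_combination this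

theorem universal (hF : (2 : F) ≠ 0) (hα : α ≠ 0) (hβ : β ≠ 0) (x y z : F)
    (h0 : α * x ^ 2 + β * y ^ 2 - α * β * z ^ 2 = 0) (hne : ¬ (x = 0 ∧ y = 0 ∧ z = 0)) (c : F) :
    ∃ x' y' z' : F, α * x' ^ 2 + β * y' ^ 2 - α * β * z' ^ 2 = c := by
  by_cases hx : x = 0
  · by_cases hy : y = 0
    · have hz : z ≠ 0 := fun hz => hne ⟨hx, hy, hz⟩
      subst hx hy
      exact absurd h0 (by simp [hα, hβ, hz])
    · refine ⟨(c - β) / (2 * β * y) * x, 1 + (c - β) / (2 * β * y) * y,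
        (c - β) / (2 * β * y) * z, ?_⟩
      have : (c - β) / (2 * β * y) * (2 * β * y) = c - β := by field_simp
      linear_combination this + ((c - β) / (2 * β * y)) ^ 2 * h0
  · refine ⟨1 + (c - α) / (2 * α * x) * x, (c - α) / (2 * α * x) * y,
        (c - α) / (2 * α * x) * z, ?_⟩
    have : (c - α) / (2 * α * x) * (2 * α * x) = c - α := by field_simp
    linear_combination this + ((c - α) / (2 * α * x)) ^ 2 * h0

theorem exists_common (hF : (2 : F) ≠ 0) (hα : α ≠ 0) (hβ : β ≠ 0) (hγ : γ ≠ 0) (hδ : δ ≠ 0)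
    (hA : ¬ Aniso α β γ δ) : ∃ a x y z u v w : F, a ≠ 0 ∧
      α * x ^ 2 + β * y ^ 2 - α * β * z ^ 2 = a ∧ γ * u ^ 2 + δ * v ^ 2 - γ * δ * w ^ 2 = a := by
  unfold Aniso at hA
  push Not at hA
  obtain ⟨x, y, z, u, v, w, h, hne⟩ := hA
  by_cases ha : α * x ^ 2 + β * y ^ 2 - α * β * z ^ 2 = 0
  · by_cases hp : x = 0 ∧ y = 0 ∧ z = 0
    · obtain ⟨u', v', w', h'⟩ := universal hF hγ hδ u v w (by linear_combination ha - h)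
        (fun hq => hne hp.1 hp.2.1 hp.2.2 hq.1 hq.2.1 hq.2.2) α
      exact ⟨α, 1, 0, 0, u', v', w', hα, by ring, h'⟩
    · obtain ⟨x', y', z', h'⟩ := universal hF hα hβ x y z ha hp γ
      exact ⟨γ, x', y', z', 1, 0, 0, hγ, h', by ring⟩
  · exact ⟨_, x, y, z, u, v, w, ha, rfl, by linear_combination -h⟩

/-- First factor of `(a,b) ⊗ (a,d)` inside `M₂((a,bd))`. -/
def basis1 (a b d : F) (hd : d ≠ 0) :
    QuaternionAlgebra.Basis (Matrix (Fin 2) (Fin 2) ℍ[F, a, b * d]) a 0 b where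
  i := !![⟨0, 1, 0, 0⟩, 0; 0, ⟨0, 1, 0, 0⟩]
  j := !![0, ⟨0, 0, 1, 0⟩; ⟨0, 0, d⁻¹, 0⟩, 0]
  k := !![0, ⟨0, 0, 0, 1⟩; ⟨0, 0, 0, d⁻¹⟩, 0]
  i_mul_i := by
    ext i j <;> fin_cases i <;> fin_cases j <;> simp [Matrix.mul_apply, Fin.sum_univ_two]
  j_mul_j := by
    ext i j <;> fin_cases i <;> fin_cases j <;> simp [Matrix.mul_apply, Fin.sum_univ_two, hd]
  i_mul_j := by
    ext i j <;> fin_cases i <;> fin_cases j <;> simp [Matrix.mul_apply, Fin.sum_univ_two]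
  j_mul_i := by
    ext i j <;> fin_cases i <;> fin_cases j <;> simp [Matrix.mul_apply, Fin.sum_univ_two]

/-- Second factor of `(a,b) ⊗ (a,d)` inside `M₂((a,bd))`. -/
def basis2 (a b d : F) :
    QuaternionAlgebra.Basis (Matrix (Fin 2) (Fin 2) ℍ[F, a, b * d]) a 0 d where
  i := !![⟨0, 1, 0, 0⟩, 0; 0, ⟨0, -1, 0, 0⟩]
  j := !![0, ⟨d, 0, 0, 0⟩; 1, 0]
  k := !![0, ⟨0, d, 0, 0⟩; ⟨0, -1, 0, 0⟩, 0]
  i_mul_i := by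
    ext i j <;> fin_cases i <;> fin_cases j <;> simp [Matrix.mul_apply, Fin.sum_univ_two]
  j_mul_j := by
    ext i j <;> fin_cases i <;> fin_cases j <;> simp [Matrix.mul_apply, Fin.sum_univ_two]
  i_mul_j := by
    ext i j <;> fin_cases i <;> fin_cases j <;> simp [Matrix.mul_apply, Fin.sum_univ_two]
  j_mul_i := by
    ext i j <;> fin_cases i <;> fin_cases j <;> simp [Matrix.mul_apply, Fin.sum_univ_two]

theorem lift_commute {B : Type*} [Ring B] [Algebra F B]
    {a b c d : F} (p : QuaternionAlgebra.Basis B a 0 b) (q : QuaternionAlgebra.Basis B c 0 d)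
    (h1 : Commute p.i q.i) (h2 : Commute p.i q.j) (h3 : Commute p.j q.i) (h4 : Commute p.j q.j)
    (x : ℍ[F, a, b]) (y : ℍ[F, c, d]) : Commute (p.liftHom x) (q.liftHom y) := by
  have e1 : Commute p.i q.k := by rw [← q.i_mul_j]; exact h1.mul_right h2
  have e2 : Commute p.j q.k := by rw [← q.i_mul_j]; exact h3.mul_right h4
  have e3 : Commute p.k q.i := by rw [← p.i_mul_j]; exact h1.mul_left h3
  have e4 : Commute p.k q.j := by rw [← p.i_mul_j]; exact h2.mul_left h4
  have e5 : Commute p.k q.k := by rw [← p.i_mul_j]; exact e1.mul_left e2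
  have hq : ∀ z : B, Commute z q.i → Commute z q.j → Commute z q.k →
      Commute z (q.liftHom y) := by
    intro z z1 z2 z3
    rw [QuaternionAlgebra.Basis.liftHom_apply, QuaternionAlgebra.Basis.lift]
    exact (((Commute.symm (Algebra.commutes _ z : Commute _ z)).add_right (z1.smul_right _)).add_right
      (z2.smul_right _)).add_right (z3.smul_right _)
  rw [QuaternionAlgebra.Basis.liftHom_apply, QuaternionAlgebra.Basis.lift]
  exact (((Commute.add_left (Algebra.commutes _ _) ((hq _ h1 h2 e1).smul_left _)).add_left
      ((hq _ h3 h4 e2).smul_left _))).add_left ((hq _ e3 e4 e5).smul_left _)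

theorem common_slot (hF : (2 : F) ≠ 0) (a b d : F) (ha : a ≠ 0) (hb : b ≠ 0) (hd : d ≠ 0) :
    Nonempty (ℍ[F, a, b] ⊗[F] ℍ[F, a, d] ≃ₐ[F] Matrix (Fin 2) (Fin 2) ℍ[F, a, b * d]) := by
  refine ⟨AlgEquiv.ofBijective (Algebra.TensorProduct.lift (basis1 a b d hd).liftHom
    (basis2 a b d).liftHom (lift_commute _ _ ?_ ?_ ?_ ?_))
    (bijective_of_algHom hF ha hb ha hd ?_ _)⟩
  all_goals try (
    show _ * _ = _ * _
    ext i j <;> fin_cases i <;> fin_cases j <;>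
      simp [Matrix.mul_apply, Fin.sum_univ_two, basis1, basis2, hd])
  simp [Module.finrank_matrix, QuaternionAlgebra.finrank_eq_four]

theorem brauer (hF : (2 : F) ≠ 0) (hα : α ≠ 0) (hβ : β ≠ 0) (hγ : γ ≠ 0) (hδ : δ ≠ 0)
    (hA : ¬ Aniso α β γ δ) : ∃ c d : F, c ≠ 0 ∧ d ≠ 0 ∧
      Nonempty (ℍ[F, α, β] ⊗[F] ℍ[F, γ, δ] ≃ₐ[F] Matrix (Fin 2) (Fin 2) ℍ[F, c, d]) := by
  obtain ⟨a, x, y, z, u, v, w, ha, h1, h2⟩ := exists_common hF hα hβ hγ hδ hA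
  obtain ⟨b, hb, ⟨p⟩⟩ := exists_basis hF hα hβ x y z a h1 ha
  obtain ⟨d, hd, ⟨q⟩⟩ := exists_basis hF hγ hδ u v w a h2 ha
  obtain ⟨e⟩ := common_slot hF a b d ha hb hd
  refine ⟨a, b * d, ha, mul_ne_zero hb hd, ⟨AlgEquiv.trans (AlgEquiv.symm
    (AlgEquiv.ofBijective (Algebra.TensorProduct.map p.liftHom q.liftHom)
      (bijective_of_algHom hF ha hb ha hd ?_ _))) e⟩⟩
  rw [Module.finrank_tensorProduct, QuaternionAlgebra.finrank_eq_four,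
      QuaternionAlgebra.finrank_eq_four]

/-- One by one matrices. -/
def oneEquiv (A : Type*) [Ring A] [Algebra F A] : Matrix (Fin 1) (Fin 1) A ≃ₐ[F] A where
  toFun M := M 0 0
  invFun a := fun _ _ => a
  left_inv M := by ext i j; fin_cases i; fin_cases j; rfl
  right_inv a := rfl
  map_mul' M N := by simp [Matrix.mul_apply]
  map_add' M N := rfl
  commutes' r := by simp [Matrix.algebraMap_matrix_apply]

theorem aniso_iff : (QuadraticMap.weightedSumSquares F
        (fun i : Fin 6 => [α, β, -(α * β), -γ, -δ, γ * δ].get i)).Anisotropic ↔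
    Aniso α β γ δ := by
  constructor
  · intro h x y z u v w h0
    have := h ![x, y, z, u, v, w] (by
      simp [QuadraticMap.weightedSumSquares_apply, Fin.sum_univ_six]
      linear_combination h0)
    exact ⟨congrFun this 0, congrFun this 1, congrFun this 2, congrFun this 3, congrFun this 4,
      congrFun this 5⟩
  · intro h x hx
    simp [QuadraticMap.weightedSumSquares_apply, Fin.sum_univ_six] at hx
    have := h (x 0) (x 1) (x 2) (x 3) (x 4) (x 5) (by linear_combination hx)
    ext i
    fin_cases i <;> simp [this]

end Albert

/-- Albert: over a field `F` of characteristic `≠ 2`, the biquaternion algebra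
`(α,β) ⊗ (γ,δ)` is a division algebra iff the Albert form `⟨α, β, -αβ, -γ, -δ, γδ⟩` is
anisotropic; and if the Albert form is isotropic then `(α,β) ⊗ (γ,δ)` is Brauer-equivalent to a
quaternion algebra over `F`. -/
theorem stmt_14 (F : Type*) [Field F] (hF : (2 : F) ≠ 0)
    (α β γ δ : F) (hα : α ≠ 0) (hβ : β ≠ 0) (hγ : γ ≠ 0) (hδ : δ ≠ 0) :
    ((∀ x : ℍ[F, α, β] ⊗[F] ℍ[F, γ, δ], x ≠ 0 → IsUnit x) ↔
      (QuadraticMap.weightedSumSquares F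
        (fun i : Fin 6 => [α, β, -(α * β), -γ, -δ, γ * δ].get i)).Anisotropic) ∧
    (¬ (QuadraticMap.weightedSumSquares F
        (fun i : Fin 6 => [α, β, -(α * β), -γ, -δ, γ * δ].get i)).Anisotropic →
      ∃ c d : F, c ≠ 0 ∧ d ≠ 0 ∧ ∃ n m : ℕ, 0 < n ∧ 0 < m ∧
        Nonempty ((Matrix (Fin n) (Fin n) (ℍ[F, α, β] ⊗[F] ℍ[F, γ, δ])) ≃ₐ[F]
          (Matrix (Fin m) (Fin m) ℍ[F, c, d]))) := by

  rw [Albert.aniso_iff]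
  refine ⟨⟨Albert.aniso_of_division hα hβ hγ hδ, Albert.division hF hα hβ hγ hδ⟩, fun h => ?_⟩
  obtain ⟨c, d, hc, hd, ⟨e⟩⟩ := Albert.brauer hF hα hβ hγ hδ h
  exact ⟨c, d, hc, hd, 1, 2, one_pos, two_pos, ⟨(Albert.oneEquiv _).trans e⟩⟩
end

section
/- Let E be the elliptic curve y² + y = x³ + x² - 12x - 21 over ℚ (conductor 67, discriminant -67). Then E(ℚ) = 0, i.e. the Mordell–Weil group of E over ℚ is trivial. -/
/-- The elliptic curve `y² + y = x³ + x² - 12x - 21` over `ℚ` (conductor 67). -/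
noncomputable def E67 : WeierstrassCurve ℚ := ⟨0, 1, 1, -12, -21⟩

section NumberFieldPart
open Polynomial
open scoped Matrix

noncomputable def fQ67 : ℚ[X] := X ^ 3 + 2 * X ^ 2 - 48 * X - 166
noncomputable def fZ67 : ℤ[X] := X ^ 3 + 2 * X ^ 2 - 48 * X - 166

lemma fZ67_natDegree : fZ67.natDegree = 3 := by unfold fZ67; compute_degree!
lemma fZ67_monic : fZ67.Monic := by unfold fZ67; monicity!
lemma fZ67_map : fZ67.map (algebraMap ℤ ℚ) = fQ67 := by
  simp [fZ67, fQ67]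
lemma fQ67_natDegree : fQ67.natDegree = 3 := by unfold fQ67; compute_degree!
lemma fQ67_monic : fQ67.Monic := by unfold fQ67; monicity!

lemma fZ67_eis : fZ67.IsEisensteinAt (Ideal.span {(2 : ℤ)}) := by
  have hc : fZ67 = C 1 * X ^ 3 + C 2 * X ^ 2 + C (-48) * X + C (-166) := by
    simp [fZ67]; ring
  refine ⟨?_, ?_, ?_⟩
  · rw [fZ67_monic.leadingCoeff, Ideal.mem_span_singleton]; norm_num
  · intro n hn
    rw [fZ67_natDegree] at hn
    rw [Ideal.mem_span_singleton, hc]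
    interval_cases n <;> simp [coeff_X]
  · rw [Ideal.span_singleton_pow, Ideal.mem_span_singleton, hc]
    simp [coeff_X]

lemma fZ67_irr : Irreducible fZ67 := by
  refine fZ67_eis.irreducible ?_ fZ67_monic.isPrimitive (by rw [fZ67_natDegree]; norm_num)
  exact (Ideal.span_singleton_prime (by norm_num)).2 Int.prime_two

lemma fQ67_irr : Irreducible fQ67 := by
  rw [← fZ67_map]
  exact (fZ67_monic.irreducible_iff_irreducible_map_fraction_map (K := ℚ)).1 fZ67_irr

instance fQ67_fact : Fact (Irreducible fQ67) := ⟨fQ67_irr⟩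

abbrev K67 := AdjoinRoot fQ67

instance : NumberField K67 where
  to_charZero := charZero_of_injective_algebraMap (algebraMap ℚ K67).injective
  to_finiteDimensional := (AdjoinRoot.powerBasis fQ67_irr.ne_zero).finite

noncomputable def tK : K67 := AdjoinRoot.root fQ67

lemma tK_eq : tK ^ 3 + 2 * tK ^ 2 - 48 * tK - 166 = 0 := by
  have h : eval₂ (AdjoinRoot.of fQ67) tK fQ67 = 0 := AdjoinRoot.eval₂_root fQ67
  have h2 : ∀ g : ℚ[X], g = fQ67 → eval₂ (AdjoinRoot.of fQ67) tK g =
      tK ^ 3 + 2 * tK ^ 2 - 48 * tK - 166 := by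
    rintro g hg
    rw [hg.trans fQ67.eq_1]
    simp [eval₂_sub]
  rw [← h2 _ rfl]; exact h

lemma tK_int : IsIntegral ℤ tK := by
  refine ⟨fZ67, fZ67_monic, ?_⟩
  have := tK_eq
  simpa [fZ67, eval₂_sub] using this

noncomputable def th : NumberField.RingOfIntegers K67 := ⟨tK, tK_int⟩

lemma th_eq : th ^ 3 + 2 * th ^ 2 - 48 * th - 166 = 0 := by
  apply NumberField.RingOfIntegers.coe_injective
  simp only [map_sub, map_add, map_mul, map_pow, map_ofNat, map_zero]
  exact tK_eq

noncomputable def pb67 : PowerBasis ℚ K67 := AdjoinRoot.powerBasis fQ67_irr.ne_zero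
lemma pb67_dim : pb67.dim = 3 := by simp [pb67, fQ67_natDegree]
noncomputable def bK : Module.Basis (Fin 3) ℚ K67 := pb67.basis.reindex (finCongr pb67_dim)
lemma bK_apply (i : Fin 3) : bK i = tK ^ (i : ℕ) := by
  rw [bK, Module.Basis.reindex_apply, PowerBasis.basis_eq_pow]
  rfl
lemma bK_repr (p q r : ℚ) : bK.repr (p • 1 + q • tK + r • tK ^ 2) = Finsupp.equivFunOnFinite.symm ![p, q, r] := by
  have h0 := bK_apply 0
  have h1 := bK_apply 1
  have h2 := bK_apply 2
  simp at h0 h1 h2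
  rw [← h2, ← h1, ← h0]
  ext i
  fin_cases i <;> simp

lemma finrankK : Module.finrank ℚ K67 = 3 := by
  rw [Module.finrank_eq_card_basis bK]; simp

noncomputable def M67 (R : Type*) [CommRing R] : Matrix (Fin 3) (Fin 3) R := !![0, 0, 166; 1, 0, 48; 0, 1, -2]

lemma lmm_tK : Algebra.leftMulMatrix bK tK = M67 ℚ := by
  have h3 : tK * tK ^ 2 = (166 : ℚ) • 1 + (48 : ℚ) • tK + (-2 : ℚ) • tK ^ 2 := by
    have := tK_eq
    simp only [Algebra.smul_def, map_neg, map_ofNat]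
    linear_combination this
  have h1 : tK = (0 : ℚ) • 1 + (1 : ℚ) • tK + (0 : ℚ) • tK ^ 2 := by simp
  have h2 : tK * tK = (0 : ℚ) • 1 + (0 : ℚ) • tK + (1 : ℚ) • tK ^ 2 := by simp [sq]
  ext i j
  rw [Algebra.leftMulMatrix_eq_repr_mul, bK_apply]
  fin_cases j
  · have : tK * tK ^ 0 = (0 : ℚ) • 1 + (1 : ℚ) • tK + (0 : ℚ) • tK ^ 2 := by simp
    simp only [Fin.zero_eta, Fin.val_zero, this, bK_repr]
    fin_cases i <;> simp [M67]
  · have : tK * tK ^ 1 = (0 : ℚ) • 1 + (0 : ℚ) • tK + (1 : ℚ) • tK ^ 2 := by simp [sq]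
    simp only [Fin.mk_one, Fin.val_one, this, bK_repr]
    fin_cases i <;> simp [M67]
  · simp only [Fin.reduceFinMk, Fin.val_two, h3, bK_repr]
    fin_cases i <;> simp [M67]

lemma trace67 (n : ℕ) : Algebra.trace ℚ K67 (tK ^ n) = (M67 ℚ ^ n).trace := by
  rw [Algebra.trace_eq_matrix_trace bK, map_pow, lmm_tK]

def nf67 {R : Type*} [CommRing R] (p q r : R) : R :=
  p ^ 3 - 2 * p ^ 2 * q + 100 * p ^ 2 * r - 48 * p * q ^ 2 - 402 * p * q * r + 2968 * p * r ^ 2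
    + 166 * (q ^ 3 - 2 * q ^ 2 * r - 48 * q * r ^ 2 + 166 * r ^ 3)

lemma norm67 (p q r : ℚ) : Algebra.norm ℚ (p • (1 : K67) + q • tK + r • tK ^ 2) = nf67 p q r := by
  rw [Algebra.norm_eq_matrix_det bK, map_add, map_add, map_smul, map_smul, map_smul, map_pow,
    lmm_tK, map_one, nf67, Matrix.det_fin_three]
  simp [M67, pow_succ, Matrix.mul_apply, Fin.sum_univ_three]
  ring

lemma discr67 : Algebra.discr ℚ bK = -268 := by
  have h : Algebra.traceMatrix ℚ bK = !![3, -2, 100; -2, 100, 202; 100, 202, 4064] := by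
    ext i j
    rw [Algebra.traceMatrix_apply, Algebra.traceForm_apply, bK_apply, bK_apply, ← pow_add, trace67]
    fin_cases i <;> fin_cases j <;> 
      simp [M67, pow_succ, Matrix.trace_fin_three, Matrix.mul_apply, Fin.sum_univ_three] <;> norm_num
  rw [Algebra.discr_def, h, Matrix.det_fin_three]
  simp; norm_num

open NumberField

lemma discr_rel : ∃ d : ℤ, d ^ 2 * discr K67 = -268 ∧
    ∀ z : 𝓞 K67, ∃ p q r : ℤ, (d : K67) * z = p + q * tK + r * tK ^ 2 := by
  let v : Fin 3 → 𝓞 K67 := fun i => th ^ (i : ℕ)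
  let e : Fin 3 ≃ Module.Free.ChooseBasisIndex ℤ (𝓞 K67) := by
    refine Fintype.equivOfCardEq ?_
    rw [← Module.finrank_eq_card_chooseBasisIndex, RingOfIntegers.rank, finrankK]; simp
  let b : Module.Basis (Fin 3) ℤ (𝓞 K67) := (RingOfIntegers.basis K67).reindex e.symm
  let A : Matrix (Fin 3) (Fin 3) ℤ := b.toMatrix v
  have hb : discr K67 = Algebra.discr ℤ b := (discr_eq_discr K67 b).symm
  have hv : (Algebra.discr ℤ v) = -268 := by
    have h1 : Algebra.discr ℚ bK = (Algebra.discr ℤ v : ℤ) := by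
      rw [Algebra.discr_def, Algebra.discr_def, Int.cast_det]
      congr 1
      ext i j
      simp only [Algebra.traceMatrix_apply, Algebra.traceForm_apply, Matrix.map_apply, bK_apply, v]
      have := Algebra.trace_localization ℤ (nonZeroDivisors ℤ) (Rₘ := ℚ) (Sₘ := K67) (th ^ (i : ℕ) * th ^ (j : ℕ))
      rw [← eq_intCast (algebraMap ℤ ℚ), ← this]
      congr 1
    rw [discr67] at h1
    exact_mod_cast h1.symm
  have hrel : Algebra.discr ℤ v = A.det ^ 2 * Algebra.discr ℤ b := by
    rw [← Algebra.discr_of_matrix_vecMul]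
    rw [Module.Basis.toMatrix_map_vecMul]
  have hmul : ∀ j, v j = ∑ i, A i j • b i := fun j => (b.sum_toMatrix_smul_self v j).symm
  refine ⟨A.det, ?_, ?_⟩
  · rw [hb, ← hrel, hv]
  · intro z
    have key : (A.det : 𝓞 K67) * z = ∑ j, ((A.adjugate *ᵥ (b.repr z)) j : 𝓞 K67) * v j := by
      have h1 : ∀ i, ∑ j, A i j * (A.adjugate *ᵥ (b.repr z)) j = A.det * b.repr z i := by
        intro i
        have : (A *ᵥ (A.adjugate *ᵥ (b.repr z))) i = (A.det • (b.repr z : Fin 3 → ℤ)) i := by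
          rw [Matrix.mulVec_mulVec, Matrix.mul_adjugate, Matrix.smul_mulVec, Matrix.one_mulVec]
        simpa [Matrix.mulVec, dotProduct] using this
      simp_rw [hmul, Finset.mul_sum]
      rw [Finset.sum_comm]
      conv_lhs => rw [← b.sum_repr z, Finset.mul_sum]
      refine Finset.sum_congr rfl fun i _ => ?_
      have h2 := congrArg (Int.cast : ℤ → 𝓞 K67) (h1 i)
      rw [Int.cast_sum, Int.cast_mul] at h2
      simp only [Int.cast_mul] at h2
      simp only [zsmul_eq_mul]
      rw [← mul_assoc, ← h2, Finset.sum_mul]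
      refine Finset.sum_congr rfl fun j _ => ?_
      ring
    refine ⟨(A.adjugate *ᵥ (b.repr z)) 0, (A.adjugate *ᵥ (b.repr z)) 1,
      (A.adjugate *ᵥ (b.repr z)) 2, ?_⟩
    have h3 := congrArg (algebraMap (𝓞 K67) K67) key
    rw [Fin.sum_univ_three] at h3
    simp only [map_mul, map_add, map_intCast, v, map_pow] at h3
    have h4 : algebraMap (𝓞 K67) K67 th = tK := rfl
    rw [h4] at h3
    simpa using h3

lemma discr_neg : discr K67 < 0 := by
  obtain ⟨d, h, -⟩ := discr_rel
  nlinarith [sq_nonneg d]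

lemma discr_abs : |discr K67| ≤ 268 := by
  obtain ⟨d, h, -⟩ := discr_rel
  rw [abs_of_neg discr_neg]
  have : d ≠ 0 := by rintro rfl; norm_num at h
  have : 1 ≤ d ^ 2 := by have := sq_pos_of_ne_zero this; omega
  nlinarith [discr_neg]

lemma O_two (z : 𝓞 K67) : ∃ p q r : ℤ, 2 * (z : K67) = p + q * tK + r * tK ^ 2 := by
  obtain ⟨d, h, h2⟩ := discr_rel
  obtain ⟨p, q, r, h3⟩ := h2 z
  have hd : d ∣ 2 := by
    have h4 : d.natAbs ≤ 16 := by
      by_contra! hc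
      have h5 : 17 ^ 2 ≤ d ^ 2 := by
        rw [← Int.natAbs_pow_two d]; exact_mod_cast Nat.pow_le_pow_left hc 2
      nlinarith [discr_neg]
    have h6 : d ^ 2 ∣ 268 := ⟨- discr K67, by linarith⟩
    have h7 : -16 ≤ d := by omega
    have h8 : d ≤ 16 := by omega
    interval_cases d <;> revert h6 <;> decide
  obtain ⟨m, hm⟩ := hd
  refine ⟨m * p, m * q, m * r, ?_⟩
  have : (2 : K67) = d * m := by exact_mod_cast congrArg (Int.cast : ℤ → K67) hm
  rw [this]
  push_cast
  linear_combination (m : K67) * h3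

lemma tK_minpoly : minpoly ℤ tK = fZ67 := by
  have h0 : aeval tK fZ67 = 0 := by
    have := tK_eq
    simpa [fZ67, aeval_def, eval₂_sub] using this
  have h1 : minpoly ℤ tK ∣ fZ67 := minpoly.isIntegrallyClosed_dvd tK_int h0
  refine eq_of_monic_of_associated (minpoly.monic tK_int) fZ67_monic ?_
  exact (minpoly.irreducible tK_int).associated_of_dvd fZ67_irr h1

lemma adj_form (z : K67) (hz : z ∈ Algebra.adjoin ℤ ({tK} : Set K67)) :
    ∃ p q r : ℤ, z = p + q * tK + r * tK ^ 2 := by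
  have ht := tK_eq
  induction hz using Algebra.adjoin_induction with
  | mem x hx => exact ⟨0, 1, 0, by simp at hx; simp [hx]⟩
  | algebraMap n => exact ⟨n, 0, 0, by simp⟩
  | add x y _ _ hx hy =>
    obtain ⟨p, q, r, rfl⟩ := hx
    obtain ⟨p', q', r', rfl⟩ := hy
    exact ⟨p + p', q + q', r + r', by push_cast; ring⟩
  | mul x y _ _ hx hy =>
    obtain ⟨p, q, r, rfl⟩ := hx
    obtain ⟨p', q', r', rfl⟩ := hy
    refine ⟨p * p' + 166 * (q * r' + r * q') - 332 * (r * r'),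
      p * q' + q * p' + 48 * (q * r' + r * q') + 70 * (r * r'),
      p * r' + q * q' + r * p' - 2 * (q * r' + r * q') + 52 * (r * r'), ?_⟩
    push_cast
    linear_combination ((q : K67) * r' + r * q' + r * r' * (tK - 2)) * ht

lemma O_basis (z : 𝓞 K67) : ∃ p q r : ℤ, z = p + q * th + r * th ^ 2 := by
  have h : (z : K67) ∈ Algebra.adjoin ℤ ({tK} : Set K67) := by
    have hg : pb67.gen = tK := rfl
    have := mem_adjoin_of_smul_prime_smul_of_minpoly_isEisensteinAt (R := ℤ) (B := pb67)
      Int.prime_two (by rw [hg]; exact tK_int) (z := (z : K67)) z.2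
      (by
        rw [hg]
        obtain ⟨p, q, r, h⟩ := O_two z
        have h2 : (2 : ℤ) • (z : K67) = p + q * tK + r * tK ^ 2 := by
          rw [← h]; simp
        rw [h2]
        have ht : tK ∈ Algebra.adjoin ℤ ({tK} : Set K67) := Algebra.self_mem_adjoin_singleton ℤ tK
        exact add_mem (add_mem (intCast_mem _ _) (mul_mem (intCast_mem _ _) ht))
          (mul_mem (intCast_mem _ _) (pow_mem ht 2)))
      (by rw [hg, tK_minpoly]; exact fZ67_eis)
    rwa [hg] at this
  obtain ⟨p, q, r, h⟩ := adj_form _ h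
  refine ⟨p, q, r, ?_⟩
  apply NumberField.RingOfIntegers.coe_injective
  simp only [map_add, map_mul, map_pow, map_intCast]
  exact h

lemma O_norm (p q r : ℤ) : Algebra.norm ℤ ((p : 𝓞 K67) + q * th + r * th ^ 2) = nf67 p q r := by
  have h := Algebra.coe_norm_int (K := K67) ((p : 𝓞 K67) + q * th + r * th ^ 2)
  have h2 := norm67 p q r
  have h3 : algebraMap (𝓞 K67) K67 ((p : 𝓞 K67) + q * th + r * th ^ 2)
      = (p : ℚ) • (1 : K67) + (q : ℚ) • tK + (r : ℚ) • tK ^ 2 := by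
    simp only [map_add, map_mul, map_pow, map_intCast, Algebra.smul_def, mul_one]
    rfl
  rw [show ((((p : 𝓞 K67) + q * th + r * th ^ 2 : 𝓞 K67)) : K67) = _ from h3, h2] at h
  have h4 : (nf67 (p : ℚ) q r) = ((nf67 p q r : ℤ) : ℚ) := by simp [nf67]
  rw [h4] at h
  exact_mod_cast h

lemma O_inj (p q r p' q' r' : ℤ)
    (h : (p : 𝓞 K67) + q * th + r * th ^ 2 = p' + q' * th + r' * th ^ 2) :
    p = p' ∧ q = q' ∧ r = r' := by
  have h1 := congrArg (algebraMap (𝓞 K67) K67) h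
  have h3 : ∀ p q r : ℤ, algebraMap (𝓞 K67) K67 ((p : 𝓞 K67) + q * th + r * th ^ 2)
      = (p : ℚ) • (1 : K67) + (q : ℚ) • tK + (r : ℚ) • tK ^ 2 := by
    intro p q r
    simp only [map_add, map_mul, map_pow, map_intCast, Algebra.smul_def, mul_one]
    rfl
  rw [h3, h3] at h1
  have h2 := congrArg bK.repr h1
  rw [bK_repr, bK_repr] at h2
  have e0 := DFunLike.congr_fun h2 0
  have e1 := DFunLike.congr_fun h2 1
  have e2 := DFunLike.congr_fun h2 2
  simp at e0 e1 e2
  exact ⟨e0, e1, e2⟩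

lemma O_mul (p q r p' q' r' : ℤ) :
    ((p : 𝓞 K67) + q * th + r * th ^ 2) * (p' + q' * th + r' * th ^ 2) =
    ((p * p' + 166 * (q * r' + r * q') - 332 * (r * r') : ℤ) : 𝓞 K67) +
    ((p * q' + q * p' + 48 * (q * r' + r * q') + 70 * (r * r') : ℤ) : 𝓞 K67) * th +
    ((p * r' + q * q' + r * p' - 2 * (q * r' + r * q') + 52 * (r * r') : ℤ) : 𝓞 K67) * th ^ 2 := by
  have ht := th_eq
  push_cast
  linear_combination ((q : 𝓞 K67) * r' + r * q' + r * r' * (th - 2)) * ht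

lemma nrC : InfinitePlace.nrComplexPlaces K67 = 1 := by
  have h1 := InfinitePlace.card_add_two_mul_card_eq_rank K67
  rw [finrankK] at h1
  have h2 := sign_discr K67
  rw [Int.sign_eq_neg_one_of_neg discr_neg] at h2
  have h3 : InfinitePlace.nrComplexPlaces K67 ≤ 1 := by omega
  interval_cases h : InfinitePlace.nrComplexPlaces K67
  · norm_num at h2
  · rfl

lemma unit_rank : NumberField.Units.rank K67 = 1 := by
  have h1 := InfinitePlace.card_add_two_mul_card_eq_rank K67
  have h2 := InfinitePlace.card_eq_nrRealPlaces_add_nrComplexPlaces K67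
  rw [finrankK, nrC] at h1
  rw [nrC] at h2
  rw [Units.rank]
  omega

lemma mink : (4 / Real.pi) ^ InfinitePlace.nrComplexPlaces K67 *
    ((Module.finrank ℚ K67).factorial / (Module.finrank ℚ K67 : ℝ) ^ (Module.finrank ℚ K67) * √|(discr K67 : ℝ)|) < 5 := by
  rw [nrC, finrankK]
  have h : √|(discr K67 : ℝ)| ≤ 17 := by
    rw [Real.sqrt_le_left (by norm_num)]
    have := discr_abs
    have : (|discr K67| : ℝ) ≤ 268 := by exact_mod_cast this
    linarith
  have h2 : 4 / Real.pi < 1.28 := by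
    rw [div_lt_iff₀ Real.pi_pos]
    have := Real.pi_gt_d2
    linarith
  have h3 : 0 < 4 / Real.pi := by positivity
  have h4 := Real.sqrt_nonneg |(discr K67 : ℝ)|
  norm_num [Nat.factorial]
  nlinarith

end NumberFieldPart

section UnitsPart
open Polynomial NumberField
open scoped Matrix

noncomputable def s67 : 𝓞 K67 := 36 + 3 * th - th ^ 2

lemma s67_eq : s67 ^ 3 = 2 * s67 ^ 2 + 2 * s67 + 2 := by
  have h := th_eq
  have e2 : s67 ^ 2 = (-32) - 2 * th + th ^ 2 := by
    simp only [s67]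
    linear_combination (th - 8) * h
  rw [pow_succ, e2, s67]
  linear_combination (7 - th) * h

lemma span_prime_norm (x : 𝓞 K67) (p : ℕ) (hp : p.Prime)
    (h : (Algebra.norm ℤ x).natAbs = p) (P : Ideal (𝓞 K67)) (hP : P.IsPrime)
    (hx : x ∈ P) : Submodule.IsPrincipal P := by
  have h1 : (Ideal.span {x}).absNorm = p := by rw [Ideal.absNorm_span_singleton, h]
  have h2 : (Ideal.span {x}).IsPrime :=
    Ideal.isPrime_of_irreducible_absNorm (by rw [h1]; exact hp)
  have h0 : Ideal.span {x} ≠ ⊥ := by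
    intro h0; rw [h0] at h1; simp at h1; exact hp.ne_zero h1.symm
  have h3 := h2.isMaximal h0
  have h4 := h3.eq_of_le hP.ne_top ((Ideal.span_singleton_le_iff_mem _).2 hx)
  rw [← h4]
  exact ⟨x, rfl⟩

lemma s67_norm : (Algebra.norm ℤ s67).natAbs = 2 := by
  have := O_norm 36 3 (-1)
  have h : s67 = ((36 : ℤ) : 𝓞 K67) + ((3 : ℤ) : 𝓞 K67) * th + ((-1 : ℤ) : 𝓞 K67) * th ^ 2 := by
    simp [s67]; ring
  rw [h, this]; norm_num [nf67]

lemma s67_norm' : (Algebra.norm ℤ (s67 + 1)).natAbs = 3 := by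
  have := O_norm 37 3 (-1)
  have h : s67 + 1 = ((37 : ℤ) : 𝓞 K67) + ((3 : ℤ) : 𝓞 K67) * th + ((-1 : ℤ) : 𝓞 K67) * th ^ 2 := by
    simp [s67]; ring
  rw [h, this]; norm_num [nf67]

instance pid67 : IsPrincipalIdealRing (𝓞 K67) := by
  apply RingOfIntegers.isPrincipalIdealRing_of_isPrincipal_of_norm_le_of_isPrime
  intro I hI hn
  have hn5 : Ideal.absNorm (I : Ideal (𝓞 K67)) < 5 := by
    have := lt_of_le_of_lt hn mink
    exact_mod_cast this
  set P : Ideal (𝓞 K67) := I.1 with hP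
  have hmem := Ideal.absNorm_mem P
  have hne0 : Ideal.absNorm P ≠ 0 := Ideal.absNorm_ne_zero_of_nonZeroDivisors I
  have two : (2 : 𝓞 K67) ∈ P → Submodule.IsPrincipal P := by
    intro h2
    apply span_prime_norm s67 2 Nat.prime_two s67_norm P hI
    apply hI.mem_of_pow_mem 3
    rw [s67_eq]
    have : 2 * s67 ^ 2 + 2 * s67 + 2 = (s67 ^ 2 + s67 + 1) * 2 := by ring
    rw [this]
    exact P.mul_mem_left _ h2
  interval_cases hc : Ideal.absNorm P
  · exact absurd rfl hne0
  · rw [Ideal.absNorm_eq_one_iff] at hc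
    exact absurd hc hI.ne_top
  · exact two (by exact_mod_cast hmem)
  · apply span_prime_norm (s67 + 1) 3 Nat.prime_three s67_norm' P hI
    have h3 : (3 : 𝓞 K67) ∈ P := by exact_mod_cast hmem
    have hcard : Nat.card (𝓞 K67 ⧸ P) = 3 := by
      rw [← hc]; rfl
    have hmax : P.IsMaximal := hI.isMaximal (nonZeroDivisors.coe_ne_zero I)
    let := Ideal.Quotient.field P
    have : Finite (𝓞 K67 ⧸ P) := Nat.finite_of_card_ne_zero (by rw [hcard]; norm_num)
    let := Fintype.ofFinite (𝓞 K67 ⧸ P)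
    have hpow := FiniteField.pow_card (Ideal.Quotient.mk P s67)
    rw [← Nat.card_eq_fintype_card, hcard, ← map_pow, Ideal.Quotient.eq] at hpow
    apply hI.mem_of_pow_mem 2
    have e : (s67 + 1) ^ 2 = (s67 ^ 2 + s67 + 1) * 3 - (s67 ^ 3 - s67) := by
      linear_combination s67_eq
    rw [e]
    exact sub_mem (P.mul_mem_left _ h3) hpow
  · have h4 : (2 : 𝓞 K67) * 2 ∈ P := by
      have : ((4 : ℕ) : 𝓞 K67) = 2 * 2 := by norm_num
      rw [← this]; exact hmem
    exact two ((hI.mem_or_mem h4).elim id id)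

noncomputable def u67 : (𝓞 K67)ˣ where
  val := th + 5
  inv := th ^ 2 - 3 * th - 33
  val_inv := by linear_combination th_eq
  inv_val := by linear_combination th_eq

lemma O_sq_even (z : 𝓞 K67) (p q r : ℤ) (h : z ^ 2 = p + q * th + r * th ^ 2) : 2 ∣ q := by
  obtain ⟨a, b, c, rfl⟩ := O_basis z
  rw [sq, O_mul] at h
  obtain ⟨-, h, -⟩ := O_inj _ _ _ _ _ _ h
  exact ⟨a * b + 24 * (b * c + c * b) + 35 * (c * c), by rw [← h]; ring⟩

lemma unit_decomp : ∃ η : (𝓞 K67)ˣ, ∀ x : (𝓞 K67)ˣ, ∃ n : ℤ, x = η ^ n ∨ x = - η ^ n := by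
  have : Unique (Fin (Units.rank K67)) := by rw [unit_rank]; infer_instance
  refine ⟨Units.fundSystem K67 default, fun x => ?_⟩
  obtain ⟨⟨ζ, e⟩, h, -⟩ := Units.exist_unique_eq_mul_prod K67 x
  refine ⟨e default, ?_⟩
  simp only [Fintype.prod_unique] at h
  have ho : Odd (Module.finrank ℚ K67) := by rw [finrankK]; decide
  rcases Units.torsion_eq_one_or_neg_one_of_odd_finrank ho ζ with h1 | h1
  · left; rw [h, h1]; simp
  · right; rw [h, h1]; simp

lemma O_norm_neg (x : 𝓞 K67) : Algebra.norm ℤ (-x) = - Algebra.norm ℤ x := by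
  obtain ⟨a, b, c, rfl⟩ := O_basis x
  have : -((a : 𝓞 K67) + b * th + c * th ^ 2) = ((-a : ℤ) : 𝓞 K67) + ((-b : ℤ) : 𝓞 K67) * th + ((-c : ℤ) : 𝓞 K67) * th ^ 2 := by
    push_cast; ring
  rw [this, O_norm, O_norm]; simp only [nf67]; ring

lemma unit_cases (x : (𝓞 K67)ˣ) (hx : 0 < Algebra.norm ℤ (x : 𝓞 K67)) :
    ∃ δ : (𝓞 K67)ˣ, x = δ ^ 2 ∨ x = u67 * δ ^ 2 := by
  obtain ⟨η, h⟩ := unit_decomp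
  have sgn : ∀ y δ : (𝓞 K67)ˣ, 0 < Algebra.norm ℤ (y : 𝓞 K67) → (y = δ ^ 2 ∨ y = - δ ^ 2) → y = δ ^ 2 := by
    rintro y δ hy (h | h)
    · exact h
    · exfalso
      rw [h, Units.val_neg, O_norm_neg, Units.val_pow_eq_pow_val, map_pow] at hy
      nlinarith [sq_nonneg (Algebra.norm ℤ (δ : 𝓞 K67))]
  have ev : ∀ (y : (𝓞 K67)ˣ) (n : ℤ), Even n → 0 < Algebra.norm ℤ (y : 𝓞 K67) → (y = η ^ n ∨ y = - η ^ n) →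
      ∃ δ : (𝓞 K67)ˣ, y = δ ^ 2 := by
    rintro y n ⟨m, rfl⟩ hy h
    refine ⟨η ^ m, sgn _ _ hy ?_⟩
    rw [zpow_add, ← sq] at h
    exact h
  have hu : Algebra.norm ℤ (u67 : 𝓞 K67) = 1 := by
    have := O_norm 5 1 0
    have e : (u67 : 𝓞 K67) = ((5 : ℤ) : 𝓞 K67) + ((1 : ℤ) : 𝓞 K67) * th + ((0 : ℤ) : 𝓞 K67) * th ^ 2 := by
      simp [u67]; ring
    rw [e, this]; norm_num [nf67]
  obtain ⟨m, hm⟩ := h u67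
  have hmo : Odd m := by
    rw [← Int.not_even_iff_odd]
    intro hme
    obtain ⟨δ, hδ⟩ := ev u67 m hme (by rw [hu]; norm_num) hm
    have e : (δ : 𝓞 K67) ^ 2 = ((5 : ℤ) : 𝓞 K67) + ((1 : ℤ) : 𝓞 K67) * th + ((0 : ℤ) : 𝓞 K67) * th ^ 2 := by
      rw [← Units.val_pow_eq_pow_val, ← hδ]
      simp [u67]; ring
    have := O_sq_even _ _ _ _ e
    norm_num at this
  obtain ⟨n, hn⟩ := h x
  rcases Int.even_or_odd n with hne | hno
  · obtain ⟨δ, hδ⟩ := ev x n hne hx hn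
    exact ⟨δ, Or.inl hδ⟩
  · obtain ⟨δ, hδ⟩ := ev (u67⁻¹ * x) (n - m) (hno.sub_odd hmo) (by
        have e : Algebra.norm ℤ (x : 𝓞 K67) = Algebra.norm ℤ (u67 : 𝓞 K67) * Algebra.norm ℤ ((u67⁻¹ * x : (𝓞 K67)ˣ) : 𝓞 K67) := by
          rw [← map_mul, ← Units.val_mul, mul_inv_cancel_left]
        rw [hu, one_mul] at e
        rw [← e]; exact hx) (by
        rw [zpow_sub]
        rcases hm with hm | hm <;> rcases hn with hn | hn <;> rw [hm, hn]
        · left; rw [mul_comm]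
        · right; rw [mul_comm, neg_mul]
        · right; rw [inv_neg, neg_mul, mul_comm]
        · left; rw [inv_neg, neg_mul_neg, mul_comm])
    refine ⟨δ, Or.inr ?_⟩
    rw [← hδ, mul_inv_cancel_left]

lemma alpha_sq (a e c : ℤ) (hodd : Odd a) (hco : IsCoprime a (2 * e ^ 2))
    (hN : a ^ 3 + 2 * a ^ 2 * (2 * e ^ 2) - 48 * a * (2 * e ^ 2) ^ 2 - 166 * (2 * e ^ 2) ^ 3 = c ^ 2) :
    ∃ p q r : ℤ, a = p ^ 2 + 332 * q * r - 332 * r ^ 2 ∧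
      -e ^ 2 = p * q + 48 * q * r + 35 * r ^ 2 ∧
      q ^ 2 + 2 * p * r - 4 * q * r + 52 * r ^ 2 = 0 := by
  have hc2 : IsCoprime (2 * e ^ 2) c := by
    have h1 : IsCoprime (2 * e ^ 2) (c ^ 2) := by
      have h2 : IsCoprime (2 * e ^ 2) (a ^ 3) := hco.symm.pow_right
      have := h2.add_mul_left_right (2 * a ^ 2 - 48 * a * (2 * e ^ 2) - 166 * (2 * e ^ 2) ^ 2)
      have e1 : c ^ 2 = a ^ 3 + 2 * e ^ 2 *
          (2 * a ^ 2 - 48 * a * (2 * e ^ 2) - 166 * (2 * e ^ 2) ^ 2) := by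
        rw [← hN]; ring
      rw [e1]; exact this
    exact (IsCoprime.pow_right_iff (by norm_num)).1 h1
  have hc0 : c ≠ 0 := by
    rintro rfl
    have h1 : (a ^ 3 : ℤ) = 2 * (e ^ 2 * (-2 * a ^ 2 + 48 * a * (2 * e ^ 2) + 166 * (2 * e ^ 2) ^ 2)) := by
      linear_combination hN
    have h2 : Odd (a ^ 3) := hodd.pow
    rw [h1] at h2
    exact (Int.not_odd_iff_even.2 (even_two_mul _)) h2
  set α : 𝓞 K67 := a - (2 * e ^ 2) * th with hα
  have hα' : α = ((a : ℤ) : 𝓞 K67) + ((-(2 * e ^ 2) : ℤ) : 𝓞 K67) * th + ((0 : ℤ) : 𝓞 K67) * th ^ 2 := by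
    rw [hα]; push_cast; ring
  have hNα : Algebra.norm ℤ α = c ^ 2 := by
    rw [hα', O_norm, ← hN]; simp only [nf67]; ring
  -- α divides c ^ 2
  have hdvd : α ∣ (c : 𝓞 K67) ^ 2 := by
    refine ⟨(a : 𝓞 K67) ^ 2 + 2 * a * (2 * e ^ 2) - 48 * (2 * e ^ 2) ^ 2 +
      th * (a * (2 * e ^ 2) + 2 * (2 * e ^ 2) ^ 2) + th ^ 2 * (2 * e ^ 2) ^ 2, ?_⟩
    have := congrArg (Int.cast : ℤ → 𝓞 K67) hN
    push_cast at this
    rw [hα]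
    linear_combination -this + (2 * e ^ 2 : 𝓞 K67) ^ 3 * th_eq
  let I : Ideal (𝓞 K67) := Ideal.span {(c : 𝓞 K67), α}
  have hcI : (c : 𝓞 K67) ∈ I := Ideal.subset_span (by simp)
  have hαI : α ∈ I := Ideal.subset_span (by simp)
  -- norm of I
  have hnI : Ideal.absNorm I ≤ c.natAbs := by
    obtain ⟨x, y, hxy⟩ := hc2
    have hth : th - ((x * a : ℤ) : 𝓞 K67) ∈ I := by
      have := congrArg (Int.cast : ℤ → 𝓞 K67) hxy
      push_cast at this
      have e1 : th - ((x * a : ℤ) : 𝓞 K67) = (y * th) * c + (-x) * α := by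
        rw [hα]; push_cast
        linear_combination -th * this
      rw [e1]
      exact add_mem (I.mul_mem_left _ hcI) (I.mul_mem_left _ hαI)
    have : NeZero c.natAbs := ⟨by simpa using hc0⟩
    have hz : ((c.natAbs : ℕ) : 𝓞 K67 ⧸ I) = 0 := by
      have : ((c.natAbs : ℕ) : 𝓞 K67) ∈ I := by
        rcases Int.natAbs_eq c with h | h
        · have e : ((c.natAbs : ℕ) : 𝓞 K67) = c := by
            conv_rhs => rw [h]
            simp
          rw [e]; exact hcI
        · have e : ((c.natAbs : ℕ) : 𝓞 K67) = -c := by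
            conv_rhs => rw [h]
            simp
          rw [e]; exact neg_mem hcI
      have h2 := Ideal.Quotient.eq_zero_iff_mem.2 this
      simpa using h2
    have hsurj : Function.Surjective (fun k : Fin c.natAbs => ((k : ℕ) : 𝓞 K67 ⧸ I)) := by
      intro w
      obtain ⟨z, rfl⟩ := Ideal.Quotient.mk_surjective w
      obtain ⟨p, q, r, rfl⟩ := O_basis z
      have ht : Ideal.Quotient.mk I th = ((x * a : ℤ) : 𝓞 K67 ⧸ I) := by
        rw [← map_intCast (Ideal.Quotient.mk I), Ideal.Quotient.eq]; exact hth
      set n : ℤ := p + q * (x * a) + r * (x * a) ^ 2 with hn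
      have hzn : Ideal.Quotient.mk I (p + q * th + r * th ^ 2) = (n : 𝓞 K67 ⧸ I) := by
        simp only [map_add, map_mul, map_pow, map_intCast, ht, hn]
        push_cast; ring
      have hcz : (c.natAbs : ℤ) ≠ 0 := by simpa using hc0
      have hpos := Int.emod_nonneg n hcz
      have hlt := Int.emod_lt_of_pos n (lt_of_le_of_ne (by positivity) hcz.symm)
      refine ⟨⟨(n % c.natAbs).toNat, by omega⟩, ?_⟩
      rw [hzn]
      have h5 : (((n % c.natAbs).toNat : ℤ) : 𝓞 K67 ⧸ I) = ((n % c.natAbs : ℤ) : 𝓞 K67 ⧸ I) := by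
        rw [Int.toNat_of_nonneg hpos]
      have h6 : (n : 𝓞 K67 ⧸ I) = ((n % c.natAbs : ℤ) : 𝓞 K67 ⧸ I) := by
        conv_lhs => rw [← Int.emod_add_mul_ediv n c.natAbs]
        rw [Int.cast_add, Int.cast_mul, Int.cast_natCast, hz, zero_mul, add_zero]
      rw [h6, ← h5, Int.cast_natCast]
    have := Nat.card_le_card_of_surjective _ hsurj
    rw [Nat.card_fin] at this
    exact this
  obtain ⟨β, hβ⟩ := (pid67.principal I)
  have hβ : I = Ideal.span {β} := hβ
  have hβI : β ∈ I := by rw [hβ]; exact Ideal.mem_span_singleton_self β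
  -- β ^ 2 is a multiple of α
  obtain ⟨γ, hγ⟩ : α ∣ β ^ 2 := by
    obtain ⟨x, y, hxy⟩ := Ideal.mem_span_pair.1 hβI
    obtain ⟨w, hw⟩ := hdvd
    refine ⟨x ^ 2 * w + 2 * x * y * c + y ^ 2 * α, ?_⟩
    rw [← hxy]
    linear_combination x ^ 2 * hw
  have hNβ : (Algebra.norm ℤ β).natAbs ≤ c.natAbs := by
    rw [hβ, Ideal.absNorm_span_singleton] at hnI; exact hnI
  have hNγ : (Algebra.norm ℤ β) ^ 2 = c ^ 2 * Algebra.norm ℤ γ := by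
    rw [← map_pow, hγ, map_mul, hNα]
  have hβ0 : Algebra.norm ℤ β ≠ 0 := by
    intro h0
    rw [Algebra.norm_eq_zero_iff] at h0
    rw [hβ, h0] at hcI
    simp at hcI
    exact hc0 hcI
  have hsq : (Algebra.norm ℤ β) ^ 2 ≤ c ^ 2 := Int.natAbs_le_iff_sq_le.1 hNβ
  have hb2 : 0 < (Algebra.norm ℤ β) ^ 2 := by positivity
  have hcpos : 0 < c ^ 2 := by positivity
  have hγ1 : Algebra.norm ℤ γ = 1 := by
    have h1 : 0 < Algebra.norm ℤ γ := by
      by_contra! h; nlinarith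
    have h2 : Algebra.norm ℤ γ < 2 := by
      by_contra! h; nlinarith
    omega
  have hγu : IsUnit γ := by
    rw [← Ideal.span_singleton_eq_top, ← Ideal.absNorm_eq_one_iff,
      Ideal.absNorm_span_singleton, hγ1]
    rfl
  obtain ⟨ε, rfl⟩ := hγu
  obtain ⟨δ, hδ | hδ⟩ := unit_cases ε (by rw [hγ1]; norm_num)
  · have h1 : (β * (δ⁻¹ : (𝓞 K67)ˣ)) ^ 2 = α := by
      have hd : (δ : 𝓞 K67) * (δ⁻¹ : (𝓞 K67)ˣ) = 1 := by simp
      rw [mul_pow, hγ, hδ, Units.val_pow_eq_pow_val]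
      linear_combination α * ((δ : 𝓞 K67) * (δ⁻¹ : (𝓞 K67)ˣ) + 1) * hd
    obtain ⟨p, q, r, hpqr⟩ := O_basis (β * (δ⁻¹ : (𝓞 K67)ˣ))
    rw [hpqr, sq, O_mul, hα'] at h1
    obtain ⟨h2, h3, h4⟩ := O_inj _ _ _ _ _ _ h1
    exact ⟨p, q, r, by linarith, by linarith, by linarith⟩
  · exfalso
    set κ : 𝓞 K67 := ((δ⁻¹ : (𝓞 K67)ˣ) : 𝓞 K67) with hκ
    have hd : (δ : 𝓞 K67) * κ = 1 := by simp [hκ]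
    have h1 : (β * κ) ^ 2 = α * (th + 5) := by
      have hu : (u67 : 𝓞 K67) = th + 5 := rfl
      rw [mul_pow, hγ, hδ, Units.val_mul, Units.val_pow_eq_pow_val, hu]
      linear_combination (th + 5) * α * ((δ : 𝓞 K67) * κ + 1) * hd
    have h2 : (β * κ) ^ 2 = ((5 * a : ℤ) : 𝓞 K67) + ((a - 10 * e ^ 2 : ℤ) : 𝓞 K67) * th
        + ((-2 * e ^ 2 : ℤ) : 𝓞 K67) * th ^ 2 := by
      rw [h1, hα]; push_cast; ring
    have h3 := O_sq_even _ _ _ _ h2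
    obtain ⟨k, hk⟩ := hodd
    omega

end UnitsPart

lemma int_sq_of_coprime {a b c : ℤ} (h : IsCoprime a b) (heq : a * b = c ^ 2) :
    ∃ a0 : ℤ, a = a0 ^ 2 ∨ a = -a0 ^ 2 :=
  Int.sq_of_gcd_eq_one (Int.isCoprime_iff_gcd_eq_one.1 h) heq

/-- Shape of the `x`-coordinate of a rational point. -/
lemma point_shape (x y : ℚ) (h : y ^ 2 + y = x ^ 3 + x ^ 2 - 12 * x - 21) :
    ∃ e c : ℤ, (x.den : ℤ) = 4 * e ^ 2 ∧
      x.num ^ 3 + 2 * x.num ^ 2 * (2 * e ^ 2) - 48 * x.num * (2 * e ^ 2) ^ 2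
        - 166 * (2 * e ^ 2) ^ 3 = c ^ 2 := by
  set n : ℤ := x.num with hn
  set D : ℤ := (x.den : ℤ) with hD
  have hDpos : 0 < D := by rw [hD]; exact_mod_cast x.den_pos
  have hco : IsCoprime n D := by
    rw [Int.isCoprime_iff_nat_coprime]; simpa [hn, hD] using x.reduced
  have hDQ : (D : ℚ) ≠ 0 := by exact_mod_cast hDpos.ne'
  have hx : x = n / D := by rw [hn, hD]; exact_mod_cast (Rat.num_div_den x).symm
  -- the integer square
  obtain ⟨m, hm⟩ : ∃ m : ℤ, D * (4 * n ^ 3 + 4 * n ^ 2 * D - 48 * n * D ^ 2 - 83 * D ^ 3) = m ^ 2 := by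
    have h1 : ((D * (4 * n ^ 3 + 4 * n ^ 2 * D - 48 * n * D ^ 2 - 83 * D ^ 3) : ℤ) : ℚ)
        = (D ^ 2 * (2 * y + 1)) ^ 2 := by
      have h2 : (2 * y + 1) ^ 2 = 4 * x ^ 3 + 4 * x ^ 2 - 48 * x - 83 := by linear_combination 4 * h
      rw [mul_pow, h2, hx]
      push_cast
      field_simp
    have h3 : IsSquare ((D * (4 * n ^ 3 + 4 * n ^ 2 * D - 48 * n * D ^ 2 - 83 * D ^ 3) : ℤ) : ℚ) :=
      ⟨_, by rw [h1, sq]⟩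
    rw [Rat.isSquare_intCast_iff] at h3
    obtain ⟨m, hm⟩ := h3
    exact ⟨m, by rw [hm, sq]⟩
  -- D is even
  have hDe : Even D := by
    by_contra hDo
    rw [Int.not_even_iff_odd] at hDo
    have hc2 : IsCoprime D (4 * n ^ 3 + 4 * n ^ 2 * D - 48 * n * D ^ 2 - 83 * D ^ 3) := by
      have h2 : IsCoprime D 4 := by
        rw [Int.isCoprime_iff_gcd_eq_one]
        have : IsCoprime D 2 := by
          obtain ⟨k, hk⟩ := hDo; exact ⟨1, -k, by rw [hk]; ring⟩
        have := this.pow_right (n := 2)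
        exact Int.isCoprime_iff_gcd_eq_one.1 (by simpa using this)
      have h1 : IsCoprime D (4 * n ^ 3) := h2.mul_right hco.symm.pow_right
      have := h1.add_mul_left_right (4 * n ^ 2 - 48 * n * D - 83 * D ^ 2)
      have e1 : 4 * n ^ 3 + 4 * n ^ 2 * D - 48 * n * D ^ 2 - 83 * D ^ 3 =
        4 * n ^ 3 + D * (4 * n ^ 2 - 48 * n * D - 83 * D ^ 2) := by ring
      rw [e1]; exact this
    obtain ⟨k, hk⟩ := int_sq_of_coprime hc2 hm
    obtain ⟨l, hl⟩ := int_sq_of_coprime hc2.symm ((mul_comm _ _).trans hm)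
    have hk : D = k ^ 2 := by
      rcases hk with hk | hk
      · exact hk
      · nlinarith [sq_nonneg k]
    have hko : Odd k := by
      rw [hk] at hDo
      by_contra h; rw [Int.not_odd_iff_even] at h
      exact (Int.not_even_iff_odd.2 hDo) (h.pow_of_ne_zero (by norm_num))
    have hpos : 0 ≤ 4 * n ^ 3 + 4 * n ^ 2 * D - 48 * n * D ^ 2 - 83 * D ^ 3 := by
      by_contra! h; nlinarith [sq_nonneg m]
    have hl : 4 * n ^ 3 + 4 * n ^ 2 * D - 48 * n * D ^ 2 - 83 * D ^ 3 = l ^ 2 := by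
      rcases hl with hl | hl
      · exact hl
      · nlinarith [sq_nonneg l]
    have hD8 : (D : ZMod 8) = 1 := by
      rw [hk]
      obtain ⟨j, rfl⟩ := hko
      push_cast
      generalize (j : ZMod 8) = j'
      revert j'; decide
    have h8 := congrArg (Int.cast : ℤ → ZMod 8) hl
    push_cast at h8
    rw [hD8] at h8
    generalize (n : ZMod 8) = n' at h8
    generalize (l : ZMod 8) = l' at h8
    revert h8; revert n' l'; decide
  obtain ⟨D', hD'⟩ := hDe
  have hno : Odd n := by
    by_contra hne
    rw [Int.not_odd_iff_even] at hne
    obtain ⟨n', hn'⟩ := hne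
    have := hco
    rw [hn', hD', ← two_mul, ← two_mul] at this
    have := this.of_mul_left_left.of_mul_right_left
    rw [isCoprime_self, Int.isUnit_iff] at this
    omega
  have hD'e : Even D' := by
    by_contra hDo
    rw [Int.not_even_iff_odd] at hDo
    have h1 : 8 * (D' * (n ^ 3 + 2 * n ^ 2 * D' - 48 * n * D' ^ 2 - 166 * D' ^ 3)) = m ^ 2 := by
      rw [← hm, hD']; ring
    have hm2 : Even m := by
      have : Even (m ^ 2) := ⟨4 * (D' * (n ^ 3 + 2 * n ^ 2 * D' - 48 * n * D' ^ 2 - 166 * D' ^ 3)), by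
        rw [← h1]; ring⟩
      exact (Int.even_pow.1 this).1
    obtain ⟨m', rfl⟩ := hm2
    have h2 : 2 * (D' * (n ^ 3 + 2 * n ^ 2 * D' - 48 * n * D' ^ 2 - 166 * D' ^ 3)) = m' ^ 2 := by
      linarith [h1, show (m' + m') ^ 2 = 4 * m' ^ 2 by ring]
    have hm2 : Even m' := by
      have : Even (m' ^ 2) := ⟨(D' * (n ^ 3 + 2 * n ^ 2 * D' - 48 * n * D' ^ 2 - 166 * D' ^ 3)), by
        rw [← h2]; ring⟩
      exact (Int.even_pow.1 this).1
    obtain ⟨m', rfl⟩ := hm2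
    have h3 : D' * (n ^ 3 + 2 * (n ^ 2 * D' - 24 * n * D' ^ 2 - 83 * D' ^ 3)) = 2 * m' ^ 2 := by
      linarith [h2, show (m' + m') ^ 2 = 4 * m' ^ 2 by ring]
    have h4 : Odd (D' * (n ^ 3 + 2 * (n ^ 2 * D' - 24 * n * D' ^ 2 - 83 * D' ^ 3))) :=
      hDo.mul ((hno.pow).add_even (even_two_mul _))
    rw [h3] at h4
    exact (Int.not_odd_iff_even.2 (even_two_mul _)) h4
  obtain ⟨E, hE⟩ := hD'e
  have hDE : D = 4 * E := by omega
  have h16 : (4 : ℤ) ^ 2 ∣ m ^ 2 := ⟨E * (n ^ 3 + 4 * n ^ 2 * E - 192 * n * E ^ 2 - 1328 * E ^ 3), by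
    rw [← hm, hDE]; ring⟩
  rw [Int.pow_dvd_pow_iff (by norm_num)] at h16
  obtain ⟨m', rfl⟩ := h16
  have hm' : E * (n ^ 3 + 4 * n ^ 2 * E - 192 * n * E ^ 2 - 1328 * E ^ 3) = m' ^ 2 := by
    have : 16 * (E * (n ^ 3 + 4 * n ^ 2 * E - 192 * n * E ^ 2 - 1328 * E ^ 3)) = 16 * m' ^ 2 := by
      rw [show 16 * m' ^ 2 = (4 * m') ^ 2 by ring, ← hm, hDE]; ring
    linarith
  have hcE : IsCoprime E (n ^ 3 + 4 * n ^ 2 * E - 192 * n * E ^ 2 - 1328 * E ^ 3) := by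
    have h0 : IsCoprime n E := by rw [hDE] at hco; exact hco.of_mul_right_right
    have h1 : IsCoprime E (n ^ 3) := h0.symm.pow_right
    have := h1.add_mul_left_right (4 * n ^ 2 - 192 * n * E - 1328 * E ^ 2)
    have e1 : n ^ 3 + 4 * n ^ 2 * E - 192 * n * E ^ 2 - 1328 * E ^ 3 =
        n ^ 3 + E * (4 * n ^ 2 - 192 * n * E - 1328 * E ^ 2) := by ring
    rw [e1]; exact this
  have hEpos : 0 < E := by omega
  obtain ⟨e, he⟩ := int_sq_of_coprime hcE hm'
  obtain ⟨c, hc⟩ := int_sq_of_coprime hcE.symm ((mul_comm _ _).trans hm')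
  have he : E = e ^ 2 := by
    rcases he with he | he
    · exact he
    · nlinarith [sq_nonneg e]
  have hpos : 0 ≤ n ^ 3 + 4 * n ^ 2 * E - 192 * n * E ^ 2 - 1328 * E ^ 3 := by
    by_contra! h; nlinarith [sq_nonneg m']
  have hc : n ^ 3 + 4 * n ^ 2 * E - 192 * n * E ^ 2 - 1328 * E ^ 3 = c ^ 2 := by
    rcases hc with hc | hc
    · exact hc
    · nlinarith [sq_nonneg c]
  refine ⟨e, c, by rw [hDE, he], ?_⟩
  rw [← hc, he]; ring

lemma den_pow (k : ℕ) : ∀ x y : ℚ, y ^ 2 + y = x ^ 3 + x ^ 2 - 12 * x - 21 →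
    (4 : ℤ) ^ k ∣ (x.den : ℤ) := by
  induction k with
  | zero => intro x y _; simp
  | succ k ih =>
    intro x y h
    obtain ⟨e, c, hD, hc⟩ := point_shape x y h
    have hco : IsCoprime x.num (4 * e ^ 2) := by
      rw [← hD, Int.isCoprime_iff_nat_coprime]; simpa using x.reduced
    have hco2 : IsCoprime x.num (2 * e ^ 2) := by
      rw [show 4 * e ^ 2 = 2 * (2 * e ^ 2) by ring] at hco
      exact hco.of_mul_right_right
    have hodd : Odd x.num := by
      have h2 : IsCoprime x.num 2 := hco2.of_mul_right_left
      rw [← Int.not_even_iff_odd]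
      rintro ⟨t, ht⟩
      rw [ht, ← two_mul] at h2
      have := h2.of_mul_left_left
      rw [isCoprime_self, Int.isUnit_iff] at this
      omega
    have he0 : e ≠ 0 := by
      rintro rfl
      have := x.den_pos
      simp at hD
    obtain ⟨p, q, r, h1, h2, h3⟩ := alpha_sq x.num e c hodd hco2 hc
    generalize x.num = a at *
    have hp : Odd p := by
      have : Odd (p ^ 2) := by
        have e1 : p ^ 2 = a - 2 * (166 * q * r - 166 * r ^ 2) := by linarith
        rw [e1]; exact hodd.sub_even (even_two_mul _)
      by_contra hp; rw [Int.not_odd_iff_even] at hp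
      exact (Int.not_even_iff_odd.2 this) (hp.pow_of_ne_zero (by norm_num))
    have hr0 : r ≠ 0 := by
      rintro rfl
      have hq : q = 0 := by
        have : q ^ 2 = 0 := by linarith
        exact pow_eq_zero_iff (by norm_num) |>.1 this
      rw [hq] at h2
      apply he0
      have : e ^ 2 = 0 := by linarith
      exact pow_eq_zero_iff (by norm_num) |>.1 this
    have hq0 : q ≠ 0 := by
      rintro rfl
      have h4 : r * (p + 26 * r) = 0 := by linarith
      rcases mul_eq_zero.1 h4 with h | h
      · exact hr0 h
      · obtain ⟨t, ht⟩ := hp; omega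
    -- the halved point
    have hrQ : (r : ℚ) ≠ 0 := by exact_mod_cast hr0
    have heQ : (e : ℚ) ≠ 0 := by exact_mod_cast he0
    have hqQ : (q : ℚ) ≠ 0 := by exact_mod_cast hq0
    have g1 : (a : ℚ) = p ^ 2 + 332 * q * r - 332 * r ^ 2 := by exact_mod_cast h1
    have g2 : -(e : ℚ) ^ 2 = p * q + 48 * q * r + 35 * r ^ 2 := by exact_mod_cast h2
    have g3 : (q : ℚ) ^ 2 + 2 * p * r - 4 * q * r + 52 * r ^ 2 = 0 := by exact_mod_cast h3
    set x1 : ℚ := q / (2 * r) - 1 with hx1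
    have hL : (-q * (2 * x1) ^ 2 + 48 * r * (2 * x1) + 166 * r) ^ 2 =
        4 * e ^ 2 * (4 * x1 ^ 3 + 4 * x1 ^ 2 - 48 * x1 - 83) := by
      have hpp : (p : ℚ) = -(q ^ 2 - 4 * q * r + 52 * r ^ 2) / (2 * r) := by
        field_simp; linarith
      have hee : (e : ℚ) ^ 2 = -(p * q + 48 * q * r + 35 * r ^ 2) := by linarith
      rw [hee, hpp, hx1]
      field_simp
      ring
    have hnew : (((-q * (2 * x1) ^ 2 + 48 * r * (2 * x1) + 166 * r) / (2 * e) - 1) / 2) ^ 2 +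
        (((-q * (2 * x1) ^ 2 + 48 * r * (2 * x1) + 166 * r) / (2 * e) - 1) / 2) =
        x1 ^ 3 + x1 ^ 2 - 12 * x1 - 21 := by
      set L := (-q * (2 * x1) ^ 2 + 48 * r * (2 * x1) + 166 * r)
      have : (L / (2 * e)) ^ 2 = 4 * x1 ^ 3 + 4 * x1 ^ 2 - 48 * x1 - 83 := by
        rw [div_pow, hL]; field_simp; ring
      linear_combination this / 4
    have hden := ih _ _ hnew
    -- den x1 divides q
    have hx1q : x1 = ((-(p - 2 * q + 26 * r) - q : ℤ) : ℚ) / (q : ℤ) := by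
      rw [hx1]; push_cast
      field_simp
      linear_combination g3
    have hdq : (x1.den : ℤ) ∣ q := by
      rw [hx1q, ← Rat.divInt_eq_div]
      exact Rat.den_dvd _ _
    have hkq : (4 : ℤ) ^ k ∣ q := hden.trans hdq
    -- 4 ^ k divides r ^ 2
    have hkr : (4 : ℤ) ^ k ∣ r := by
      rcases k with _ | k
      · simp
      have hq4 : (4 : ℤ) ^ (k + 2) ∣ q ^ 2 := by
        have := pow_dvd_pow_of_dvd hkq 2
        rw [← pow_mul] at this
        exact (pow_dvd_pow 4 (by omega)).trans this
      have hqe : q ^ 2 = (2 * r) * (-(p - 2 * q + 26 * r)) := by linarith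
      have ho : IsCoprime ((4 : ℤ) ^ (k + 2)) (-(p - 2 * q + 26 * r)) := by
        apply IsCoprime.pow_left
        rw [show (4 : ℤ) = 2 ^ 2 by norm_num]
        apply IsCoprime.pow_left
        obtain ⟨t, ht⟩ := hp
        exact ⟨t + 1 - q + 13 * r, 1, by rw [ht]; ring⟩
      rw [hqe] at hq4
      have h5 := ho.dvd_of_dvd_mul_right hq4
      rw [pow_succ] at h5
      obtain ⟨w, hw⟩ := h5
      exact ⟨2 * w, by linarith⟩
    have hke : (4 : ℤ) ^ k ∣ e ^ 2 := by
      have e1 : e ^ 2 = q * (-(p + 48 * r)) + r * (-35 * r) := by linarith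
      rw [e1]
      exact dvd_add (hkq.mul_right _) (hkr.mul_right _)
    rw [hD, pow_succ, mul_comm]
    exact mul_dvd_mul_left 4 hke

lemma no_points (x y : ℚ) : y ^ 2 + y ≠ x ^ 3 + x ^ 2 - 12 * x - 21 := by
  intro h
  have h1 := Int.le_of_dvd (by exact_mod_cast x.den_pos) (den_pow x.den x y h)
  have h2 : x.den < 4 ^ x.den := Nat.lt_pow_self (by norm_num)
  have : (4 : ℤ) ^ x.den ≤ x.den := h1
  have h3 : 4 ^ x.den ≤ x.den := by exact_mod_cast this
  omega

/-- the Mordell–Weil group of `y² + y = x³ + x² - 12x - 21` over `ℚ` is trivial: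
the point at infinity is the only rational point. -/
theorem stmt_18 (P : E67.toAffine.Point) : P = 0 := by
  rcases P with _ | ⟨x, y, h⟩
  · rfl
  · exfalso
    have h1 := h.1
    rw [WeierstrassCurve.Affine.equation_iff] at h1
    simp only [E67] at h1
    exact no_points x y (by linear_combination h1)
end
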